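/- arXiv:2203.16623 — 2 statements merged into one kernel-verified Lean document; each statement's English description precedes it below -/
import Mathlib

section
/- Under the push-subgradient algorithm, if the graph sequence {𝔾(t)} is uniformly strongly connected and the subgradients are uniformly bounded (‖g_i(t)‖₂ ≤ G for all i, t), then there exists a constant C > 0, depending on n, L, G, x(0), g(0) and z* but not on T, such that for every integer T ≥ 1, running the algorithm with fixed stepsize α(t) = 1/√T for t ∈ {0,1,…,T−1} yields f( (Σ_{τ=0}^{T−1} z̄(τ)) / T ) − f(z*) ≤ C/√T. -/
open Filter Finset
open scoped InnerProductSpace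

def PhiM {n : ℕ} (W : ℕ → Matrix (Fin n) (Fin n) ℝ) (t : ℕ) : ℕ → Fin n → Fin n → ℝ
  | 0 => fun i j => if i = j then 1 else 0
  | (k+1) => fun i j => ∑ l, W (t+k) i l * PhiM W t k l j

section
variable {n : ℕ} (W : ℕ → Matrix (Fin n) (Fin n) ℝ)
    (hWnonneg : ∀ t i j, 0 ≤ W t i j)
    (hWcol : ∀ t j, ∑ i, W t i j = 1)
    (hWdiag : ∀ t i, 0 < W t i i)
    (β : ℝ) (hβ : 0 < β)
    (hWβ : ∀ t i j, 0 < W t i j → β ≤ W t i j)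

include hWnonneg in
theorem Phi_nonneg (t k : ℕ) (i j : Fin n) : 0 ≤ PhiM W t k i j := by
  induction k generalizing i with
  | zero => simp only [PhiM]; split_ifs <;> norm_num
  | succ k ih => exact Finset.sum_nonneg fun l _ => mul_nonneg (hWnonneg _ _ _) (ih l)

include hWnonneg in
theorem Phi_step (t k : ℕ) (i l j : Fin n) : W (t+k) i l * PhiM W t k l j ≤ PhiM W t (k+1) i j :=
  Finset.single_le_sum (f := fun l => W (t+k) i l * PhiM W t k l j)
    (fun l _ => mul_nonneg (hWnonneg _ _ _) (Phi_nonneg W hWnonneg t k l j)) (Finset.mem_univ l)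

include hWnonneg hβ hWβ in
theorem Phi_lb (t k : ℕ) (i j : Fin n) (h : 0 < PhiM W t k i j) : β ^ k ≤ PhiM W t k i j := by
  induction k generalizing i with
  | zero => 
    simp only [PhiM] at h ⊢
    split_ifs at h ⊢ <;> simp_all
  | succ k ih =>
    obtain ⟨l, -, hl⟩ := Finset.exists_lt_of_sum_lt (s := Finset.univ) (f := fun _ => (0:ℝ))
      (g := fun l => W (t+k) i l * PhiM W t k l j) (by simpa [PhiM] using h)
    have h1 : 0 < W (t+k) i l := by
      rcases (hWnonneg (t+k) i l).lt_or_eq with h | h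
      · exact h
      · simp [← h] at hl
    have h2 : 0 < PhiM W t k l j := pos_of_mul_pos_right hl h1.le
    refine le_trans ?_ (Phi_step W hWnonneg t k i l j)
    rw [pow_succ']
    exact mul_le_mul (hWβ _ _ _ h1) (ih l h2) (by positivity) h1.le

include hWnonneg hWdiag in
theorem Phi_mono (t k m : ℕ) (i j : Fin n) (h : 0 < PhiM W t k i j) :
    0 < PhiM W t (k+m) i j := by
  induction m with
  | zero => exact h
  | succ m ih =>
    exact lt_of_lt_of_le (mul_pos (hWdiag _ i) ih) (Phi_step W hWnonneg t (k+m) i i j)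

include hWnonneg hWdiag in
theorem Phi_card (L : ℕ)
    (hUSC : ∀ t : ℕ, ∀ i j : Fin n,
      Relation.TransGen (fun u v : Fin n => ∃ k ∈ Finset.Ico t (t + L), 0 < W k v u) i j)
    (t : ℕ) (j : Fin n) (m : ℕ) :
    min n (m+1) ≤ (Finset.univ.filter fun i => 0 < PhiM W t (m*L) i j).card := by
  induction m with
  | zero =>
    refine le_trans (min_le_right _ _) ?_
    rw [Nat.succ_le_iff, Finset.card_pos]
    exact ⟨j, by simp [PhiM]⟩
  | succ m ih =>
    have hsub : (Finset.univ.filter fun i => 0 < PhiM W t (m*L) i j) ⊆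
        (Finset.univ.filter fun i => 0 < PhiM W t ((m+1)*L) i j) := by
      intro i hi
      simp only [Finset.mem_filter, Finset.mem_univ, true_and] at hi ⊢
      rw [add_mul, one_mul]
      exact Phi_mono W hWnonneg hWdiag t _ L i j hi
    by_cases hex : ∃ i, ¬ 0 < PhiM W t (m*L) i j
    · have hlt : (Finset.univ.filter fun i => 0 < PhiM W t (m*L) i j) ⊂
        (Finset.univ.filter fun i => 0 < PhiM W t ((m+1)*L) i j) := by
        refine hsub.ssubset_of_ne ?_
        intro heq
        obtain ⟨i, hi⟩ := hex
        apply hi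
        have hall : ∀ v, Relation.TransGen (fun u v : Fin n =>
            ∃ k ∈ Finset.Ico (t+m*L) (t+m*L + L), 0 < W k v u) j v → 0 < PhiM W t (m*L) v j := by
          have key : ∀ u v, 0 < PhiM W t (m*L) u j →
              (∃ k ∈ Finset.Ico (t+m*L) (t+m*L + L), 0 < W k v u) → 0 < PhiM W t (m*L) v j := by
            rintro u v hu ⟨k, hk, hW⟩
            rw [Finset.mem_Ico] at hk
            obtain ⟨q, rfl⟩ := Nat.exists_eq_add_of_le hk.1
            have h1 := Phi_mono W hWnonneg hWdiag t (m*L) q u j hu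
            have h2 : 0 < PhiM W t (m*L+q+1) v j :=
              lt_of_lt_of_le (mul_pos (by simpa [add_assoc] using hW) h1)
                (Phi_step W hWnonneg t (m*L+q) v u j)
            have h3 := Phi_mono W hWnonneg hWdiag t (m*L+q+1) (L - (q+1)) v j h2
            have h4 : m*L+q+1 + (L-(q+1)) = (m+1)*L := by
              rw [add_mul, one_mul]; omega
            rw [h4] at h3
            have : v ∈ (Finset.univ.filter fun i => 0 < PhiM W t ((m+1)*L) i j) := by simpa using h3
            rw [← heq] at this
            simpa using this
          have hj : 0 < PhiM W t (m*L) j j := by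
            have := Phi_mono W hWnonneg hWdiag t 0 (m*L) j j (by simp [PhiM])
            simpa using this
          intro v hv
          induction hv with
          | single h => exact key _ _ hj h
          | tail _ h ih => exact key _ _ ih h
        exact hall i (hUSC _ _ _)
      have := Finset.card_lt_card hlt
      omega
    · push Not at hex
      have : (Finset.univ.filter fun i => 0 < PhiM W t ((m+1)*L) i j) = Finset.univ := by
        apply Finset.eq_univ_of_forall
        intro i
        exact hsub (by simpa using hex i)
      rw [this]; simp

include hWnonneg hWdiag in
theorem Phi_pos (L : ℕ)
    (hUSC : ∀ t : ℕ, ∀ i j : Fin n,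
      Relation.TransGen (fun u v : Fin n => ∃ k ∈ Finset.Ico t (t + L), 0 < W k v u) i j)
    (t : ℕ) (i j : Fin n) : 0 < PhiM W t (n*L) i j := by
  have h := Phi_card W hWnonneg hWdiag L hUSC t j n
  have h2 : (Finset.univ.filter fun i => 0 < PhiM W t (n*L) i j) = Finset.univ := by
    apply Finset.eq_univ_of_card
    apply le_antisymm (Finset.card_le_univ _)
    simpa using h
  have : i ∈ (Finset.univ.filter fun i => 0 < PhiM W t (n*L) i j) := by rw [h2]; simp
  simpa using this

theorem Phi_y (y : ℕ → Fin n → ℝ)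
    (hyrec : ∀ t i, y (t + 1) i = ∑ j, W t i j * y t j) (t k : ℕ) (i : Fin n) :
    y (t+k) i = ∑ j, PhiM W t k i j * y t j := by
  induction k generalizing i with
  | zero => simp [PhiM]
  | succ k ih =>
    rw [← add_assoc, hyrec]
    simp only [ih, PhiM, Finset.mul_sum, Finset.sum_mul]
    rw [Finset.sum_comm]
    simp only [mul_assoc]

include hWcol in
theorem y_sum (y : ℕ → Fin n → ℝ) (hy0 : ∀ i, y 0 i = 1)
    (hyrec : ∀ t i, y (t + 1) i = ∑ j, W t i j * y t j) (t : ℕ) : ∑ i, y t i = n := by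
  induction t with
  | zero => simp [hy0]
  | succ t ih =>
    simp only [hyrec]
    rw [Finset.sum_comm]
    simp only [← Finset.sum_mul, hWcol, one_mul, ih]

/-- perturbed evolution -/
theorem Phi_x {E : Type*} [NormedAddCommGroup E] [NormedSpace ℝ E]
    (hWnonneg : ∀ t i j, 0 ≤ W t i j)
    (hWcol : ∀ t j, ∑ i, W t i j = 1)
    (x g : ℕ → Fin n → E) (α : ℝ) (hα : 0 ≤ α) (G : ℝ) (hG : ∀ t i, ‖g t i‖ ≤ G)
    (hx : ∀ t i, x (t + 1) i = ∑ j, W t i j • (x t j - α • g t j)) (t k : ℕ) :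
    ∑ i, ‖x (t+k) i - ∑ j, PhiM W t k i j • x t j‖ ≤ k * (n * (α * G)) := by
  induction k with
  | zero => simp [PhiM]
  | succ k ih =>
    have h1 : ∀ i, x (t+(k+1)) i - ∑ j, PhiM W t (k+1) i j • x t j
        = ∑ l, W (t+k) i l • ((x (t+k) l - ∑ j, PhiM W t k l j • x t j) - α • g (t+k) l) := by
      intro i
      rw [← add_assoc, hx]
      simp only [PhiM, Finset.sum_smul]
      rw [Finset.sum_comm, ← Finset.sum_sub_distrib]
      refine Finset.sum_congr rfl fun l _ => ?_
      simp only [smul_sub, Finset.smul_sum, smul_smul]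
      abel
    calc ∑ i, ‖x (t+(k+1)) i - ∑ j, PhiM W t (k+1) i j • x t j‖
        ≤ ∑ i, ∑ l, W (t+k) i l * (‖x (t+k) l - ∑ j, PhiM W t k l j • x t j‖ + α * G) := by
          refine Finset.sum_le_sum fun i _ => ?_
          rw [h1]
          refine (norm_sum_le _ _).trans (Finset.sum_le_sum fun l _ => ?_)
          rw [norm_smul, Real.norm_of_nonneg (hWnonneg _ _ _)]
          refine mul_le_mul_of_nonneg_left ((norm_sub_le _ _).trans ?_) (hWnonneg _ _ _)
          rw [norm_smul, Real.norm_of_nonneg hα]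
          gcongr
          exact hG _ _
      _ = ∑ l, (‖x (t+k) l - ∑ j, PhiM W t k l j • x t j‖ + α * G) := by
          rw [Finset.sum_comm]
          simp only [← Finset.sum_mul, hWcol, one_mul]
      _ ≤ _ := by
          rw [Finset.sum_add_distrib]
          simp only [Finset.sum_const, Finset.card_univ, Fintype.card_fin, nsmul_eq_mul]
          push_cast
          linarith
end

/-- contraction -/
theorem contract {n : ℕ} {E : Type*} [NormedAddCommGroup E] [NormedSpace ℝ E]
    (p q : Fin n → ℝ) (γ : ℝ) (hγ1 : γ < 1) (j0 : Fin n)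
    (hp : ∀ j, 0 ≤ p j) (hq : ∀ j, 0 ≤ q j) (hps : ∑ j, p j = 1) (hqs : ∑ j, q j = 1)
    (hp0 : γ ≤ p j0) (hq0 : γ ≤ q j0) (z : Fin n → E) (D : ℝ)
    (hD : ∀ i j, ‖z i - z j‖ ≤ D) :
    ‖∑ j, p j • z j - ∑ j, q j • z j‖ ≤ (1 - γ) * D := by
  set a : Fin n → ℝ := fun j => p j - if j = j0 then γ else 0 with ha
  set b : Fin n → ℝ := fun j => q j - if j = j0 then γ else 0 with hb
  have ha0 : ∀ j, 0 ≤ a j := by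
    intro j; simp only [ha]; split_ifs with h
    · subst h; linarith
    · simpa using hp j
  have hb0 : ∀ j, 0 ≤ b j := by
    intro j; simp only [hb]; split_ifs with h
    · subst h; linarith
    · simpa using hq j
  have has : ∑ j, a j = 1 - γ := by simp [ha, hps]
  have hbs : ∑ j, b j = 1 - γ := by simp [hb, hqs]
  have e1 : ∑ j, p j • z j - ∑ j, q j • z j = ∑ j, a j • z j - ∑ j, b j • z j := by
    simp [ha, hb, sub_smul, Finset.sum_sub_distrib]
  have e2 : (1-γ) • (∑ j, a j • z j - ∑ j, b j • z j) = ∑ j, ∑ l, (a j * b l) • (z j - z l) := by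
    simp only [smul_sub, Finset.sum_sub_distrib]
    congr 1
    · simp only [← Finset.sum_smul, ← Finset.mul_sum, hbs]
      rw [Finset.smul_sum]
      simp only [smul_smul, mul_comm]
    · rw [Finset.sum_comm]
      simp only [← Finset.sum_smul, ← Finset.sum_mul, has]
      rw [Finset.smul_sum]
      simp only [smul_smul]
  have e3 : (1-γ) * ‖∑ j, a j • z j - ∑ j, b j • z j‖ ≤ (1-γ) * ((1-γ) * D) := by
    have : 0 ≤ 1 - γ := by linarith
    rw [← Real.norm_of_nonneg this, ← norm_smul, Real.norm_of_nonneg this, e2]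
    calc _ ≤ ∑ j, ∑ l, (a j * b l) * D := by
          refine (norm_sum_le _ _).trans (Finset.sum_le_sum fun j _ => ?_)
          refine (norm_sum_le _ _).trans (Finset.sum_le_sum fun l _ => ?_)
          rw [norm_smul, Real.norm_of_nonneg (mul_nonneg (ha0 _) (hb0 _))]
          exact mul_le_mul_of_nonneg_left (hD _ _) (mul_nonneg (ha0 _) (hb0 _))
      _ = _ := by
          simp only [← Finset.sum_mul, ← Finset.mul_sum, hbs, has]; ring
  rw [e1]
  exact le_of_mul_le_mul_left e3 (by linarith)

theorem y_lb {n : ℕ} (hn : 0 < n) (W : ℕ → Matrix (Fin n) (Fin n) ℝ)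
    (hWnonneg : ∀ t i j, 0 ≤ W t i j)
    (hWcol : ∀ t j, ∑ i, W t i j = 1)
    (hWdiag : ∀ t i, 0 < W t i i)
    (β : ℝ) (hβ : 0 < β)
    (hWβ : ∀ t i j, 0 < W t i j → β ≤ W t i j)
    (L : ℕ)
    (hUSC : ∀ t : ℕ, ∀ i j : Fin n,
      Relation.TransGen (fun u v : Fin n => ∃ k ∈ Finset.Ico t (t + L), 0 < W k v u) i j)
    (y : ℕ → Fin n → ℝ)
    (hy0 : ∀ i, y 0 i = 1)
    (hyrec : ∀ t i, y (t + 1) i = ∑ j, W t i j * y t j) (t : ℕ) (i : Fin n) :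
    β ^ (n*L) ≤ y t i := by
  have hβ1 : β ≤ 1 := by
    refine (hWβ 0 i i (hWdiag 0 i)).trans ?_
    rw [← hWcol 0 i]
    exact Finset.single_le_sum (f := fun l => W 0 l i) (fun l _ => hWnonneg _ _ _) (Finset.mem_univ i)
  have hnn : ∀ t i, 0 ≤ y t i := by
    intro t
    induction t with
    | zero => intro i; simp [hy0]
    | succ t ih => intro i; rw [hyrec]; exact Finset.sum_nonneg fun j _ => mul_nonneg (hWnonneg _ _ _) (ih j)
  rcases le_total t (n*L) with h | h
  · have h1 := Phi_y W y hyrec 0 t i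
    simp only [zero_add, hy0, mul_one] at h1
    have hd : 0 < PhiM W 0 t i i := by
      have := Phi_mono W hWnonneg hWdiag 0 0 t i i (by simp [PhiM])
      simpa using this
    rw [h1]
    calc β ^ (n*L) ≤ β ^ t := pow_le_pow_of_le_one hβ.le hβ1 h
      _ ≤ PhiM W 0 t i i := Phi_lb W hWnonneg β hβ hWβ _ _ _ _ hd
      _ ≤ _ := Finset.single_le_sum (f := fun l => PhiM W 0 t i l)
        (fun l _ => Phi_nonneg W hWnonneg _ _ _ _) (Finset.mem_univ i)
  · obtain ⟨s, rfl⟩ := Nat.exists_eq_add_of_le' h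
    rw [Phi_y W y hyrec s (n*L) i]
    calc β ^ (n*L) ≤ β ^ (n*L) * n := le_mul_of_one_le_right (by positivity) (by exact_mod_cast hn)
      _ = ∑ j, β ^ (n*L) * y s j := by rw [← Finset.mul_sum, y_sum W hWcol y hy0 hyrec]
      _ ≤ _ := Finset.sum_le_sum fun j _ => mul_le_mul_of_nonneg_right
        (Phi_lb W hWnonneg β hβ hWβ _ _ _ _ (Phi_pos W hWnonneg hWdiag L hUSC s i j)) (hnn _ _)

theorem diam_window {n : ℕ} (W : ℕ → Matrix (Fin n) (Fin n) ℝ)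
    (hWnonneg : ∀ t i j, 0 ≤ W t i j)
    (hWcol : ∀ t j, ∑ i, W t i j = 1)
    (y : ℕ → Fin n → ℝ)
    (hyrec : ∀ t i, y (t + 1) i = ∑ j, W t i j * y t j)
    (η : ℝ) (hη : 0 < η) (hy : ∀ t i, η ≤ y t i)
    {E : Type*} [NormedAddCommGroup E] [NormedSpace ℝ E]
    (x g z : ℕ → Fin n → E) (α : ℝ) (hα : 0 ≤ α) (G : ℝ) (hG0 : 0 ≤ G) (hG : ∀ t i, ‖g t i‖ ≤ G)
    (hx : ∀ t i, x (t + 1) i = ∑ j, W t i j • (x t j - α • g t j))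
    (hz : ∀ t i, z t i = (y t i)⁻¹ • x t i)
    (t k : ℕ) (γ : ℝ) (hγ1 : γ < 1) (j0 : Fin n)
    (hγ : ∀ i, γ ≤ PhiM W t k i j0 * y t j0 / y (t+k) i) :
    Metric.diam (Set.range (z (t+k))) ≤
      (1-γ) * Metric.diam (Set.range (z t)) + 2 * (k * (n * (α * G)) / η) := by
  have hyp : ∀ t i, 0 < y t i := fun t i => hη.trans_le (hy t i)
  set Q : Fin n → Fin n → ℝ := fun i j => PhiM W t k i j * y t j / y (t+k) i with hQ
  have hQ0 : ∀ i j, 0 ≤ Q i j := fun i j =>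
    div_nonneg (mul_nonneg (Phi_nonneg W hWnonneg _ _ _ _) (hyp _ _).le) (hyp _ _).le
  have hQ1 : ∀ i, ∑ j, Q i j = 1 := by
    intro i
    simp only [hQ]
    rw [← Finset.sum_div, ← Phi_y W y hyrec, div_self (hyp _ _).ne']
  have herr : ∀ i, ‖z (t+k) i - ∑ j, Q i j • z t j‖ ≤ k * (n * (α * G)) / η := by
    intro i
    have e : z (t+k) i - ∑ j, Q i j • z t j =
        (y (t+k) i)⁻¹ • (x (t+k) i - ∑ j, PhiM W t k i j • x t j) := by
      rw [smul_sub, ← hz, Finset.smul_sum]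
      congr 1
      refine Finset.sum_congr rfl fun j _ => ?_
      rw [hz t j, smul_smul, smul_smul]
      congr 1
      simp only [hQ]
      have := (hyp t j).ne'
      field_simp
    have h1 := Phi_x W hWnonneg hWcol x g α hα G hG hx t k
    have h2 : ‖x (t+k) i - ∑ j, PhiM W t k i j • x t j‖ ≤ k * (n * (α * G)) :=
      (Finset.single_le_sum (f := fun i => ‖x (t+k) i - ∑ j, PhiM W t k i j • x t j‖)
        (fun _ _ => norm_nonneg _) (Finset.mem_univ i)).trans h1
    rw [e, norm_smul, norm_inv, Real.norm_of_nonneg (hyp _ _).le, inv_mul_eq_div]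
    exact div_le_div₀ (by positivity) h2 hη (hy _ _)
  have hD : ∀ i j, ‖z t i - z t j‖ ≤ Metric.diam (Set.range (z t)) := by
    intro i j
    rw [← dist_eq_norm]
    exact Metric.dist_le_diam_of_mem (Set.finite_range _).isBounded ⟨i, rfl⟩ ⟨j, rfl⟩
  have hnn : 0 ≤ (1-γ) * Metric.diam (Set.range (z t)) + 2 * (k * (n * (α * G)) / η) := by
    have : 0 ≤ 1 - γ := by linarith
    have := Metric.diam_nonneg (s := Set.range (z t))
    positivity
  refine Metric.diam_le_of_forall_dist_le hnn ?_
  rintro _ ⟨i, rfl⟩ _ ⟨l, rfl⟩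
  rw [dist_eq_norm]
  have h3 := contract (Q i) (Q l) γ hγ1 j0 (hQ0 i) (hQ0 l) (hQ1 i) (hQ1 l) (hγ i) (hγ l) (z t) _ hD
  have e : z (t+k) i - z (t+k) l = (z (t+k) i - ∑ j, Q i j • z t j) - (z (t+k) l - ∑ j, Q l j • z t j)
    + (∑ j, Q i j • z t j - ∑ j, Q l j • z t j) := by abel
  rw [e]
  have := norm_add_le ((z (t+k) i - ∑ j, Q i j • z t j) - (z (t+k) l - ∑ j, Q l j • z t j))
    (∑ j, Q i j • z t j - ∑ j, Q l j • z t j)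
  have := norm_sub_le (z (t+k) i - ∑ j, Q i j • z t j) (z (t+k) l - ∑ j, Q l j • z t j)
  linarith [herr i, herr l]

theorem scalar_sum (D : ℕ → ℝ) (hD : ∀ t, 0 ≤ D t) (N : ℕ) (γ ε : ℝ)
    (h1 : ∀ t, D (t+N) ≤ (1-γ) * D t + ε) (h2 : ∀ k ≤ N, D k ≤ D 0 + ε) (T : ℕ) :
    γ * ∑ t ∈ Finset.range T, D t ≤ N * (D 0 + ε) + T * ε := by
  have a1 : ∑ t ∈ Finset.range T, D t ≤ ∑ t ∈ Finset.range (N+T), D t :=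
    Finset.sum_le_sum_of_subset_of_nonneg (by intro i; simp; omega) (fun i _ _ => hD i)
  rw [Finset.sum_range_add] at a1
  have a2 : ∑ t ∈ Finset.range N, D t ≤ N * (D 0 + ε) := by
    have := Finset.sum_le_card_nsmul (Finset.range N) D (D 0 + ε)
      (fun i hi => h2 i (Finset.mem_range.1 hi).le)
    simpa [mul_add] using this
  have a3 : ∑ t ∈ Finset.range T, D (N+t) ≤ (1-γ) * ∑ t ∈ Finset.range T, D t + T * ε := by
    calc _ ≤ ∑ t ∈ Finset.range T, ((1-γ) * D t + ε) :=
          Finset.sum_le_sum fun t _ => by rw [add_comm]; exact h1 t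
      _ = _ := by rw [Finset.sum_add_distrib, ← Finset.mul_sum]; simp
  linarith

theorem scalar_bdd (D : ℕ → ℝ) (N : ℕ) (hN : 0 < N) (γ ε : ℝ) (hγ : 0 < γ) (hγ1 : γ < 1)
    (hε : 0 ≤ ε) (hD0 : 0 ≤ D 0)
    (h1 : ∀ t, D (t+N) ≤ (1-γ) * D t + ε) (h2 : ∀ k ≤ N, D k ≤ D 0 + ε) (t : ℕ) :
    D t ≤ D 0 + ε + ε / γ := by
  induction t using Nat.strong_induction_on with
  | _ t ih =>
    rcases le_total t N with h | h
    · have := h2 t h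
      have : 0 ≤ ε / γ := by positivity
      linarith
    · obtain ⟨s, rfl⟩ := Nat.exists_eq_add_of_le' h
      have a := ih s (by omega)
      have b := mul_le_mul_of_nonneg_left a (by linarith : 0 ≤ 1 - γ)
      have c : γ * (ε / γ) = ε := by field_simp
      have := h1 s
      nlinarith

theorem consensus {n : ℕ} (hn : 0 < n) (W : ℕ → Matrix (Fin n) (Fin n) ℝ)
    (hWnonneg : ∀ t i j, 0 ≤ W t i j)
    (hWcol : ∀ t j, ∑ i, W t i j = 1)
    (hWdiag : ∀ t i, 0 < W t i i)
    (β : ℝ) (hβ : 0 < β)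
    (hWβ : ∀ t i j, 0 < W t i j → β ≤ W t i j)
    (L : ℕ) (hL : 0 < L)
    (hUSC : ∀ t : ℕ, ∀ i j : Fin n,
      Relation.TransGen (fun u v : Fin n => ∃ k ∈ Finset.Ico t (t + L), 0 < W k v u) i j)
    (y : ℕ → Fin n → ℝ)
    (hy0 : ∀ i, y 0 i = 1)
    (hyrec : ∀ t i, y (t + 1) i = ∑ j, W t i j * y t j)
    {E : Type*} [NormedAddCommGroup E] [NormedSpace ℝ E] (G : ℝ) (hG0 : 0 ≤ G) (D0 : ℝ) :
    ∃ M Dm : ℝ, 0 ≤ M ∧ 0 ≤ Dm ∧ ∀ (x g z : ℕ → Fin n → E) (T : ℕ), 1 ≤ T → 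
      (∀ t i, ‖g t i‖ ≤ G) → 
      (∀ t i, x (t + 1) i = ∑ j, W t i j • (x t j - (1 / Real.sqrt T) • g t j)) → 
      (∀ t i, z t i = (y t i)⁻¹ • x t i) → Metric.diam (Set.range (z 0)) = D0 →
      (1 / Real.sqrt T) * ∑ t ∈ Finset.range T, Metric.diam (Set.range (z t)) ≤ M ∧
      ∀ t, Metric.diam (Set.range (z t)) ≤ Dm := by
  have hylb := y_lb hn W hWnonneg hWcol hWdiag β hβ hWβ L hUSC y hy0 hyrec
  set N := n * L with hN
  have hNpos : 0 < N := Nat.mul_pos hn hL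
  set η := β ^ N with hη
  have hηp : 0 < η := by positivity
  have hnR : (0:ℝ) < n := by exact_mod_cast hn
  set γ := min (η * η / n) (1/2) with hγd
  have hγ : 0 < γ := lt_min (by positivity) (by norm_num)
  have hγ1 : γ < 1 := (min_le_right _ _).trans_lt (by norm_num)
  have hyub : ∀ t i, y t i ≤ n := by
    intro t i
    rw [← y_sum W hWcol y hy0 hyrec t]
    exact Finset.single_le_sum (f := y t) (fun l _ => hηp.le.trans (hylb _ _)) (Finset.mem_univ i)
  set c := 2 * (N * (n * G) / η) with hc
  have hc0 : 0 ≤ c := by positivity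
  refine ⟨|(N * (D0 + c) + c) / γ|, |D0 + c + c / γ|, abs_nonneg _, abs_nonneg _, ?_⟩
  intro x g z T hT hg hx hz hD0
  have hsq : 1 ≤ Real.sqrt T := by
    rw [Real.one_le_sqrt]; exact_mod_cast hT
  have hsq0 : 0 < Real.sqrt T := by linarith
  have hα0 : 0 ≤ 1 / Real.sqrt T := by positivity
  have hα1 : 1 / Real.sqrt T ≤ 1 := by rw [div_le_one hsq0]; exact hsq
  have hαT : 1 / Real.sqrt T * (T * (1 / Real.sqrt T)) = 1 := by
    have := Real.mul_self_sqrt (Nat.cast_nonneg (α := ℝ) T)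
    field_simp
    nlinarith
  set α := 1 / Real.sqrt T with hα
  set D : ℕ → ℝ := fun t => Metric.diam (Set.range (z t)) with hDd
  have hDn : ∀ t, 0 ≤ D t := fun t => Metric.diam_nonneg
  have hε : ∀ k : ℕ, k ≤ N → 2 * (k * (n * (α * G)) / η) ≤ α * c := by
    intro k hk
    have hk' : (k:ℝ) ≤ N := by exact_mod_cast hk
    calc 2 * (k * (n * (α * G)) / η) ≤ 2 * (N * (n * (α * G)) / η) := by gcongr
      _ = α * c := by rw [hc]; ring
  let j0 : Fin n := ⟨0, hn⟩
  have h1 : ∀ t, D (t+N) ≤ (1-γ) * D t + α * c := by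
    intro t
    have := diam_window W hWnonneg hWcol y hyrec η hηp hylb x g z α hα0 G hG0 hg hx hz t N γ hγ1 j0
      (by
        intro i
        refine (min_le_left _ _).trans ?_
        have hp := Phi_lb W hWnonneg β hβ hWβ _ _ _ _ (Phi_pos W hWnonneg hWdiag L hUSC t i j0)
        have hyi := hηp.trans_le (hylb (t+N) i)
        exact div_le_div₀ (mul_nonneg (Phi_nonneg W hWnonneg _ _ _ _) (hηp.le.trans (hylb _ _)))
          (mul_le_mul hp (hylb _ _) hηp.le (Phi_nonneg W hWnonneg _ _ _ _)) hyi (hyub _ _))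
    exact this.trans (by have := hε N le_rfl; simp only [hDd]; linarith)
  have h2 : ∀ k ≤ N, D k ≤ D 0 + α * c := by
    intro k hk
    have := diam_window W hWnonneg hWcol y hyrec η hηp hylb x g z α hα0 G hG0 hg hx hz 0 k 0
      (by norm_num) j0 (by
        intro i
        exact div_nonneg (mul_nonneg (Phi_nonneg W hWnonneg _ _ _ _) (hηp.le.trans (hylb _ _)))
          (hηp.le.trans (hylb _ _)))
    rw [zero_add] at this
    exact this.trans (by have := hε k hk; simp only [hDd]; linarith)
  have hDD : D 0 = D0 := hD0
  have hD0n : 0 ≤ D0 := hDD ▸ hDn 0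
  have hαc : α * c ≤ c := mul_le_of_le_one_left hc0 hα1
  constructor
  · have s := scalar_sum D hDn N γ (α*c) h1 h2 T
    refine le_trans ?_ (le_abs_self _)
    rw [le_div_iff₀ hγ]
    have s2 := mul_le_mul_of_nonneg_left s hα0
    have e1 : α * (N * (D 0 + α * c) + T * (α * c)) = α * (N * (D0 + α * c)) + c := by
      rw [hDD]; linear_combination c * hαT
    have e2 : α * (N * (D0 + α * c)) ≤ N * (D0 + c) := by
      calc _ ≤ 1 * (N * (D0 + α * c)) := by gcongr
        _ ≤ _ := by rw [one_mul]; gcongr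
    rw [e1] at s2
    have e3 : α * (γ * ∑ t ∈ Finset.range T, D t) = α * (∑ t ∈ Finset.range T, D t) * γ := by ring
    linarith
  · intro t
    refine le_trans ?_ (le_abs_self _)
    refine (scalar_bdd D N hNpos γ (α*c) hγ hγ1 (by positivity) (hDn 0) h1 h2 t).trans ?_
    rw [hDD]
    gcongr

theorem lip_on {n : ℕ} {E : Type*} [NormedAddCommGroup E] [NormedSpace ℝ E] [FiniteDimensional ℝ E]
    (f : Fin n → E → ℝ) (hconv : ∀ i, ConvexOn ℝ Set.univ (f i)) (c : E) (R : ℝ) :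
    ∃ K : ℝ, 0 ≤ K ∧ ∀ j u v, ‖u - c‖ ≤ R → ‖v - c‖ ≤ R → |f j u - f j v| ≤ K * ‖u - v‖ := by
  have h : ∀ j, ∃ K : NNReal, LipschitzOnWith K (f j) (Metric.ball c (R+1)) := by
    intro j
    refine ((hconv j).subset (Set.subset_univ _) (convex_ball c (R+2))).exists_lipschitzOnWith_of_isBounded
      (by linarith) ?_
    have : Continuous (f j) := (hconv j).locallyLipschitz.continuous
    have hpr : ProperSpace E := FiniteDimensional.proper ℝ E
    exact ((isCompact_closedBall c (R+2)).image this).isBounded.subset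
      (Set.image_mono Metric.ball_subset_closedBall)
  choose K hK using h
  refine ⟨∑ j, (K j : ℝ), by positivity, ?_⟩
  intro j u v hu hv
  have := (hK j).dist_le_mul u (by rw [Metric.mem_ball, dist_eq_norm]; linarith) v
    (by rw [Metric.mem_ball, dist_eq_norm]; linarith)
  rw [Real.dist_eq, dist_eq_norm] at this
  refine this.trans (mul_le_mul_of_nonneg_right ?_ (norm_nonneg _))
  exact Finset.single_le_sum (f := fun j => (K j : ℝ)) (fun _ _ => NNReal.coe_nonneg _) (Finset.mem_univ j)

theorem phi_lb {n : ℕ} {E : Type*} [NormedAddCommGroup E] [NormedSpace ℝ E] [FiniteDimensional ℝ E]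
    (f : Fin n → E → ℝ) (hconv : ∀ i, ConvexOn ℝ Set.univ (f i)) (s : E)
    (hmin : ∀ w, ∑ i, f i s ≤ ∑ i, f i w) :
    ∃ K : ℝ, 0 ≤ K ∧ ∀ (w : Fin n → E) (c : E),
      - (K * ∑ i, ‖w i - c‖) ≤ ∑ i, (f i (w i) - f i s) := by
  obtain ⟨K, hK0, hK⟩ := lip_on f hconv s 1
  refine ⟨K, hK0, ?_⟩
  intro w c
  set B := 1 + ‖c - s‖ + ∑ i, ‖w i - s‖ with hB
  have hsum : 0 ≤ ∑ i, ‖w i - s‖ := Finset.sum_nonneg fun _ _ => norm_nonneg _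
  have hB0 : 1 ≤ B := by have := norm_nonneg (c - s); linarith
  set θ := B⁻¹ with hθ
  have hθ0 : 0 < θ := by positivity
  have hθ1 : θ ≤ 1 := inv_le_one_of_one_le₀ hB0
  have hball : ∀ v : E, ‖v - s‖ ≤ B → ‖(s + θ • (v - s)) - s‖ ≤ 1 := by
    intro v hv
    rw [add_sub_cancel_left, norm_smul, Real.norm_of_nonneg hθ0.le, hθ, inv_mul_eq_div]
    exact (div_le_one (by linarith)).2 hv
  have hw : ∀ i, ‖w i - s‖ ≤ B := by
    intro i
    have : ‖w i - s‖ ≤ ∑ i, ‖w i - s‖ :=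
      Finset.single_le_sum (f := fun i => ‖w i - s‖) (fun _ _ => norm_nonneg _) (Finset.mem_univ i)
    have := norm_nonneg (c - s)
    linarith
  have hc : ‖c - s‖ ≤ B := by linarith
  have key : ∀ i, f i (s + θ • (c - s)) - f i s - K * (θ * ‖w i - c‖) ≤ θ * (f i (w i) - f i s) := by
    intro i
    have a := (hconv i).2 (Set.mem_univ s) (Set.mem_univ (w i)) (sub_nonneg.2 hθ1) hθ0.le (by ring)
    have e : (1 - θ) • s + θ • w i = s + θ • (w i - s) := by
      rw [sub_smul, one_smul, smul_sub]; abel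
    rw [e] at a
    simp only [smul_eq_mul] at a
    have b := hK i _ _ (hball _ hc) (hball _ (hw i))
    have e2 : (s + θ • (c - s)) - (s + θ • (w i - s)) = θ • (c - w i) := by
      simp only [smul_sub]; abel
    rw [e2, norm_smul, Real.norm_of_nonneg hθ0.le, norm_sub_rev] at b
    have := (abs_le.1 b).2
    linarith
  have h1 := Finset.sum_le_sum fun i (_ : i ∈ Finset.univ) => key i
  rw [← Finset.mul_sum, Finset.sum_sub_distrib, Finset.sum_sub_distrib, ← Finset.mul_sum,
    ← Finset.mul_sum] at h1
  have h2 := hmin (s + θ • (c - s))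
  have h3 : θ * (-(K * ∑ i, ‖w i - c‖)) ≤ θ * ∑ i, (f i (w i) - f i s) := by linarith
  exact le_of_mul_le_mul_left h3 hθ0

theorem descent {n : ℕ} (hn : 0 < n) (W : ℕ → Matrix (Fin n) (Fin n) ℝ)
    (hWcol : ∀ t j, ∑ i, W t i j = 1)
    {E : Type*} [NormedAddCommGroup E] [InnerProductSpace ℝ E]
    (x g z : ℕ → Fin n → E) (α : ℝ) (hα : 0 ≤ α) (G : ℝ) (hG : ∀ t i, ‖g t i‖ ≤ G)
    (hx : ∀ t i, x (t + 1) i = ∑ j, W t i j • (x t j - α • g t j))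
    (f : Fin n → E → ℝ) (s : E) (D : ℕ → ℝ)
    (hD : ∀ t i, ‖z t i - (n:ℝ)⁻¹ • ∑ j, x t j‖ ≤ D t)
    (hsub : ∀ t j w, f j (z t j) + ⟪g t j, w - z t j⟫_ℝ ≤ f j w) (t : ℕ) :
    ‖(n:ℝ)⁻¹ • ∑ j, x t j - s‖^2 + 2 * α * ∑ τ ∈ Finset.range t, (n:ℝ)⁻¹ * ∑ j, (f j (z τ j) - f j s)
      ≤ ‖(n:ℝ)⁻¹ • ∑ j, x 0 j - s‖^2 + 2 * α * G * ∑ τ ∈ Finset.range t, D τ + t * (α^2 * G^2) := by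
  have hnR : (0:ℝ) < n := by exact_mod_cast hn
  have hG0 : 0 ≤ G := (norm_nonneg _).trans (hG 0 ⟨0, hn⟩)
  induction t with
  | zero => simp
  | succ t ih =>
    rw [Finset.sum_range_succ, Finset.sum_range_succ]
    set u := (n:ℝ)⁻¹ • ∑ j, x t j with hu
    set gb := (n:ℝ)⁻¹ • ∑ j, g t j with hgb
    have e1 : (n:ℝ)⁻¹ • ∑ j, x (t+1) j = u - α • gb := by
      have : ∑ j, x (t+1) j = ∑ j, x t j - α • ∑ j, g t j := by
        simp only [hx]
        rw [Finset.sum_comm]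
        simp only [← Finset.sum_smul, hWcol, one_smul, Finset.sum_sub_distrib, Finset.smul_sum]
      rw [this, smul_sub, hu, hgb, smul_comm]
    have hgn : ‖gb‖ ≤ G := by
      rw [hgb, norm_smul, norm_inv, Real.norm_of_nonneg hnR.le, inv_mul_le_iff₀ hnR]
      refine (norm_sum_le _ _).trans ?_
      refine (Finset.sum_le_sum fun i _ => hG t i).trans ?_
      simp
    have e2 : ‖u - α • gb - s‖^2 = ‖u - s‖^2 - 2 * α * ⟪gb, u - s⟫_ℝ + α^2 * ‖gb‖^2 := by
      have : u - α • gb - s = (u - s) - α • gb := by abel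
      rw [this, norm_sub_sq_real, inner_smul_right, norm_smul, real_inner_comm, mul_pow,
        Real.norm_eq_abs, sq_abs]
      ring
    have hin : (n:ℝ)⁻¹ * ∑ j, (f j (z t j) - f j s) - G * D t ≤ ⟪gb, u - s⟫_ℝ := by
      rw [hgb, real_inner_smul_left, sum_inner]
      have : ∀ j, (f j (z t j) - f j s) - G * D t ≤ ⟪g t j, u - s⟫_ℝ := by
        intro j
        have a := hsub t j s
        have b : ⟪g t j, u - s⟫_ℝ = - ⟪g t j, s - z t j⟫_ℝ - ⟪g t j, z t j - u⟫_ℝ := by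
          simp only [inner_sub_right]; ring
        have c := real_inner_le_norm (g t j) (z t j - u)
        have d : ‖g t j‖ * ‖z t j - u‖ ≤ G * D t :=
          mul_le_mul (hG _ _) (hD _ _) (norm_nonneg _) hG0
        linarith
      have h := Finset.sum_le_sum fun j (_ : j ∈ Finset.univ) => this j
      have h' := mul_le_mul_of_nonneg_left h (inv_nonneg.2 hnR.le)
      rw [Finset.sum_sub_distrib] at h'
      simp only [Finset.sum_const, Finset.card_univ, Fintype.card_fin, nsmul_eq_mul] at h'
      rw [mul_sub, inv_mul_cancel_left₀ hnR.ne'] at h'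
      exact h'
    rw [e1, e2]
    have h1 := mul_le_mul_of_nonneg_left hin (by positivity : 0 ≤ 2 * α)
    have h2 : α^2 * ‖gb‖^2 ≤ α^2 * G^2 := by gcongr
    push_cast
    linarith

theorem stmt_1
    (n : ℕ) (hn : 0 < n)
    (W : ℕ → Matrix (Fin n) (Fin n) ℝ)
    (hWnonneg : ∀ t i j, 0 ≤ W t i j)
    (hWcol : ∀ t j, ∑ i, W t i j = 1)
    (hWdiag : ∀ t i, 0 < W t i i)
    (β : ℝ) (hβ : 0 < β)
    (hWβ : ∀ t i j, 0 < W t i j → β ≤ W t i j)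
    (L : ℕ) (hL : 0 < L)
    (hUSC : ∀ t : ℕ, ∀ i j : Fin n,
      Relation.TransGen (fun u v : Fin n => ∃ k ∈ Finset.Ico t (t + L), 0 < W k v u) i j)
    (d : ℕ)
    (y : ℕ → Fin n → ℝ)
    (hy0 : ∀ i, y 0 i = 1)
    (hyrec : ∀ t i, y (t + 1) i = ∑ j, W t i j * y t j)
    (x g : ℕ → ℕ → Fin n → EuclideanSpace ℝ (Fin d))
    (x0 g0 : Fin n → EuclideanSpace ℝ (Fin d))
    (hx0 : ∀ T, x T 0 = x0)
    (hg0 : ∀ T, g T 0 = g0)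
    (hxrec : ∀ T : ℕ, 1 ≤ T → ∀ t i,
      x T (t + 1) i = ∑ j, W t i j • (x T t j - (1 / Real.sqrt T) • g T t j))
    (z : ℕ → ℕ → Fin n → EuclideanSpace ℝ (Fin d))
    (hz : ∀ T t i, z T t i = (y t i)⁻¹ • x T t i)
    (G : ℝ) (hG : ∀ T t i, ‖g T t i‖ ≤ G)
    (f : Fin n → EuclideanSpace ℝ (Fin d) → ℝ)
    (hconv : ∀ i, ConvexOn ℝ Set.univ (f i))
    (F : EuclideanSpace ℝ (Fin d) → ℝ)
    (hF : ∀ w, F w = (n : ℝ)⁻¹ * ∑ i, f i w)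
    (zstar : EuclideanSpace ℝ (Fin d))
    (hmin : ∀ w, F zstar ≤ F w)
    (hsub : ∀ T t j w, f j (z T t j) + ⟪g T t j, w - z T t j⟫_ℝ ≤ f j w)
    (zbar : ℕ → ℕ → EuclideanSpace ℝ (Fin d))
    (hzbar : ∀ T t, zbar T t = (n : ℝ)⁻¹ • ∑ i, z T t i)
    :
    ∃ C : ℝ, 0 < C ∧ ∀ T : ℕ, 1 ≤ T →
      F ((T : ℝ)⁻¹ • ∑ τ ∈ Finset.range T, zbar T τ) - F zstar ≤ C / Real.sqrt T := by
  have hnR : (0:ℝ) < n := by exact_mod_cast hn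
  have hG0 : 0 ≤ G := (norm_nonneg _).trans (hG 0 0 ⟨0, hn⟩)
  have hFs : ∀ w, ∑ i, f i zstar ≤ ∑ i, f i w := by
    intro w
    have := hmin w
    rw [hF, hF] at this
    exact le_of_mul_le_mul_left this (inv_pos.2 hnR)
  have hylb := y_lb hn W hWnonneg hWcol hWdiag β hβ hWβ L hUSC y hy0 hyrec
  have hyp : ∀ t i, 0 < y t i := fun t i => (pow_pos hβ _).trans_le (hylb t i)
  have hysum := y_sum W hWcol y hy0 hyrec
  obtain ⟨M, Dm, hM, hDm, hcons⟩ := consensus hn W hWnonneg hWcol hWdiag β hβ hWβ L hL hUSC y hy0 hyrec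
    (E := EuclideanSpace ℝ (Fin d)) G hG0 (Metric.diam (Set.range x0))
  obtain ⟨K, hK0, hK⟩ := phi_lb f hconv zstar hFs
  set V0 := ‖(n:ℝ)⁻¹ • ∑ j, x0 j - zstar‖^2 with hV0
  have hV00 : 0 ≤ V0 := by positivity
  set R := Real.sqrt (V0 + 2 * (G + K) * M + G^2) with hR
  obtain ⟨K2, hK20, hK2⟩ := lip_on f hconv zstar (R + Dm)
  refine ⟨(V0 + 2 * (G + K2) * M + G^2) / 2 + 1, by positivity, ?_⟩
  intro T hT
  have hsq : 1 ≤ Real.sqrt T := by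
    rw [Real.one_le_sqrt]; exact_mod_cast hT
  have hsq0 : 0 < Real.sqrt T := by linarith
  have hTR : (0:ℝ) < T := by exact_mod_cast hT
  have hss := Real.mul_self_sqrt hTR.le
  obtain ⟨hS, hDb⟩ := hcons (x T) (g T) (z T) T hT (hG T) (hxrec T hT) (hz T) (by
    have : z T 0 = x0 := by
      funext i; rw [hz, hy0, hx0]; simp
    rw [this])
  set α := 1 / Real.sqrt T with hα
  have hα0 : 0 < α := by positivity
  have hαT : α^2 * T = 1 := by
    rw [hα]; field_simp; rw [sq, hss]
  set D : ℕ → ℝ := fun t => Metric.diam (Set.range (z T t)) with hD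
  have hDn : ∀ t, 0 ≤ D t := fun t => Metric.diam_nonneg
  have hzz : ∀ t i j, ‖z T t i - z T t j‖ ≤ D t := by
    intro t i j
    rw [← dist_eq_norm]
    exact Metric.dist_le_diam_of_mem (Set.finite_range _).isBounded ⟨i, rfl⟩ ⟨j, rfl⟩
  set u : ℕ → EuclideanSpace ℝ (Fin d) := fun t => (n:ℝ)⁻¹ • ∑ j, x T t j with hu
  have hzu : ∀ t i, ‖z T t i - u t‖ ≤ D t := by
    intro t i
    have e : z T t i - u t = (n:ℝ)⁻¹ • ∑ j, y t j • (z T t i - z T t j) := by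
      simp only [smul_sub, Finset.sum_sub_distrib]
      rw [← Finset.sum_smul (f := y t) (x := z T t i), hysum, inv_smul_smul₀ hnR.ne']
      have e0 : ∑ j, x T t j = ∑ j, y t j • z T t j := by
        refine Finset.sum_congr rfl fun j _ => ?_
        rw [hz T t j, smul_inv_smul₀ (hyp _ _).ne']
      simp only [hu]
      rw [e0]
    rw [e, norm_smul, norm_inv, Real.norm_of_nonneg hnR.le, inv_mul_le_iff₀ hnR]
    refine (norm_sum_le _ _).trans ?_
    rw [← hysum t, Finset.sum_mul]
    refine Finset.sum_le_sum fun j _ => ?_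
    rw [norm_smul, Real.norm_of_nonneg (hyp _ _).le]
    exact mul_le_mul_of_nonneg_left (hzz _ _ _) (hyp _ _).le
  have hzb : ∀ t i, ‖z T t i - zbar T t‖ ≤ D t := by
    intro t i
    have e : z T t i - zbar T t = (n:ℝ)⁻¹ • ∑ j, (z T t i - z T t j) := by
      rw [hzbar, Finset.sum_sub_distrib, smul_sub]
      simp [← Nat.cast_smul_eq_nsmul ℝ, inv_smul_smul₀ hnR.ne']
    rw [e, norm_smul, norm_inv, Real.norm_of_nonneg hnR.le, inv_mul_le_iff₀ hnR]
    refine (norm_sum_le _ _).trans ?_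
    refine (Finset.sum_le_sum fun j _ => hzz t i j).trans ?_
    simp
  have hub : ∀ t i, ‖zbar T t - zstar‖ ≤ Dm + ‖z T t i - zstar‖ := by
    intro t i
    have : zbar T t - zstar = (z T t i - zstar) - (z T t i - zbar T t) := by abel
    rw [this]
    have := norm_sub_le (z T t i - zstar) (z T t i - zbar T t)
    have := (hzb t i).trans (hDb t)
    linarith
  have hdes := descent hn W hWcol (x T) (g T) (z T) α hα0.le G (hG T) (hxrec T hT) f zstar D hzu (hsub T)
  rw [hx0] at hdes
  set P : ℕ → ℝ := fun t => (n:ℝ)⁻¹ * ∑ j, (f j (z T t j) - f j zstar) with hP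
  have hPlb : ∀ t, -(K * D t) ≤ P t := by
    intro t
    have a := hK (z T t) (u t)
    have b : ∑ i, ‖z T t i - u t‖ ≤ n * D t := by
      refine (Finset.sum_le_sum fun j _ => hzu t j).trans ?_
      simp
    have c := mul_le_mul_of_nonneg_left b hK0
    have d1 : -(n * (K * D t)) ≤ ∑ j, (f j (z T t j) - f j zstar) := by linarith
    have e := mul_le_mul_of_nonneg_left d1 (inv_nonneg.2 hnR.le)
    have e' : (n:ℝ)⁻¹ * -(n * (K * D t)) = -(K * D t) := by field_simp
    rw [e'] at e
    exact e
  have hUR : ∀ t < T, ‖u t - zstar‖ ≤ R := by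
    intro t ht
    apply Real.le_sqrt_of_sq_le
    have h1 := hdes t
    have h2 : -(K * ∑ τ ∈ Finset.range t, D τ) ≤ ∑ τ ∈ Finset.range t, P τ := by
      rw [Finset.mul_sum, ← Finset.sum_neg_distrib]
      exact Finset.sum_le_sum fun τ _ => hPlb τ
    have h3 : ∑ τ ∈ Finset.range t, D τ ≤ ∑ τ ∈ Finset.range T, D τ :=
      Finset.sum_le_sum_of_subset_of_nonneg (by intro i; simp; omega) (fun i _ _ => hDn i)
    have h4 : α * ∑ τ ∈ Finset.range t, D τ ≤ M := (mul_le_mul_of_nonneg_left h3 hα0.le).trans hS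
    have h5 := mul_le_mul_of_nonneg_left h2 (by positivity : 0 ≤ 2 * α)
    have h6 := mul_le_mul_of_nonneg_left h4 (by positivity : 0 ≤ 2 * (G + K))
    have h7 : (t:ℝ) * (α^2 * G^2) ≤ G^2 := by
      have : (t:ℝ) ≤ T := by exact_mod_cast ht.le
      calc (t:ℝ) * (α^2 * G^2) ≤ T * (α^2 * G^2) := by gcongr
        _ = (α^2 * T) * G^2 := by ring
        _ = G^2 := by rw [hαT, one_mul]
    change ‖u t - zstar‖^2 + 2 * α * ∑ τ ∈ Finset.range t, P τ ≤ _ at h1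
    linarith
  have hzR : ∀ t < T, ∀ i, ‖z T t i - zstar‖ ≤ R + Dm := by
    intro t ht i
    have : z T t i - zstar = (z T t i - u t) + (u t - zstar) := by abel
    rw [this]
    have := norm_add_le (z T t i - u t) (u t - zstar)
    have := (hzu t i).trans (hDb t)
    have := hUR t ht
    linarith
  have hzbR : ∀ t < T, ‖zbar T t - zstar‖ ≤ R + Dm := by
    intro t ht
    have e : zbar T t - zstar = (n:ℝ)⁻¹ • ∑ j, (z T t j - zstar) := by
      rw [hzbar, Finset.sum_sub_distrib, smul_sub]
      simp [← Nat.cast_smul_eq_nsmul ℝ, inv_smul_smul₀ hnR.ne']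
    rw [e, norm_smul, norm_inv, Real.norm_of_nonneg hnR.le, inv_mul_le_iff₀ hnR]
    refine (norm_sum_le _ _).trans ?_
    refine (Finset.sum_le_sum fun j _ => hzR t ht j).trans ?_
    simp [mul_add]
  have hFb : ∀ t < T, F (zbar T t) - F zstar ≤ P t + K2 * D t := by
    intro t ht
    have a : ∀ j, f j (zbar T t) - f j zstar ≤ (f j (z T t j) - f j zstar) + K2 * D t := by
      intro j
      have b := (abs_le.1 (hK2 j _ _ (hzbR t ht) (hzR t ht j))).2
      rw [norm_sub_rev] at b
      have := mul_le_mul_of_nonneg_left (hzb t j) hK20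
      linarith
    have b := Finset.sum_le_sum fun j (_ : j ∈ Finset.univ) => a j
    have c := mul_le_mul_of_nonneg_left b (inv_nonneg.2 hnR.le)
    rw [Finset.sum_add_distrib, Finset.sum_sub_distrib] at c
    simp only [Finset.sum_const, Finset.card_univ, Fintype.card_fin, nsmul_eq_mul] at c
    rw [mul_add, inv_mul_cancel_left₀ hnR.ne', mul_sub, ← hF, ← hF] at c
    exact c
  have hFconv : ConvexOn ℝ Set.univ F := by
    refine ⟨convex_univ, fun p _ q _ a b ha hb hab => ?_⟩
    have := Finset.sum_le_sum fun j (_ : j ∈ Finset.univ) =>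
      (hconv j).2 (Set.mem_univ p) (Set.mem_univ q) ha hb hab
    have := mul_le_mul_of_nonneg_left this (inv_nonneg.2 hnR.le)
    simp only [smul_eq_mul, Finset.sum_add_distrib, ← Finset.mul_sum] at this
    simp only [hF, smul_eq_mul]
    linarith
  have hJ : F ((T : ℝ)⁻¹ • ∑ τ ∈ Finset.range T, zbar T τ) ≤
      (T:ℝ)⁻¹ * ∑ τ ∈ Finset.range T, F (zbar T τ) := by
    have := hFconv.map_sum_le (t := Finset.range T) (w := fun _ => (T:ℝ)⁻¹) (p := fun τ => zbar T τ)
      (fun _ _ => by positivity) (by simp [hTR.ne']) (fun _ _ => Set.mem_univ _)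
    simpa [← Finset.smul_sum, ← Finset.mul_sum] using this
  have hsumF : ∑ τ ∈ Finset.range T, F (zbar T τ) - T * F zstar ≤
      ∑ τ ∈ Finset.range T, P τ + K2 * ∑ τ ∈ Finset.range T, D τ := by
    have := Finset.sum_le_sum fun τ (h : τ ∈ Finset.range T) => hFb τ (Finset.mem_range.1 h)
    rw [Finset.sum_sub_distrib, Finset.sum_add_distrib, ← Finset.mul_sum (Finset.range T) D K2] at this
    simp only [Finset.sum_const, Finset.card_range, nsmul_eq_mul] at this
    exact this
  have hfin : α * (∑ τ ∈ Finset.range T, P τ + K2 * ∑ τ ∈ Finset.range T, D τ)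
      ≤ (V0 + 2 * (G + K2) * M + G^2) / 2 := by
    have h1 := hdes T
    change ‖u T - zstar‖^2 + 2 * α * ∑ τ ∈ Finset.range T, P τ ≤ _ at h1
    have h6 := mul_le_mul_of_nonneg_left hS (by positivity : 0 ≤ 2 * (G + K2))
    have h7 : (T:ℝ) * (α^2 * G^2) = G^2 := by
      linear_combination G^2 * hαT
    have := sq_nonneg ‖u T - zstar‖
    linarith
  have hX := (mul_le_mul_of_nonneg_left hsumF hα0.le).trans hfin
  have hX2 : α * (T * (F ((T : ℝ)⁻¹ • ∑ τ ∈ Finset.range T, zbar T τ) - F zstar)) ≤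
      (V0 + 2 * (G + K2) * M + G^2) / 2 := by
    refine le_trans (mul_le_mul_of_nonneg_left ?_ hα0.le) hX
    have := mul_le_mul_of_nonneg_left hJ hTR.le
    rw [mul_inv_cancel_left₀ hTR.ne'] at this
    linarith
  have hαs : α * T = Real.sqrt T := by
    rw [hα]; field_simp; rw [sq, hss]
  rw [le_div_iff₀ hsq0, ← hαs]
  linarith
end

section
/- Under the push-subgradient algorithm, if the graph sequence {𝔾(t)} is uniformly strongly connected, the subgradients are uniformly bounded (‖g_i(t)‖₂ ≤ G for all i, t), and the stepsizes satisfy the step-size assumption, then for every agent k ∈ {1,…,n}: lim_{t→∞} f( (Σ_{τ=0}^t α(τ) z_k(τ)) / (Σ_{τ=0}^t α(τ)) ) = f(z*). -/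
open Filter Finset
open scoped InnerProductSpace

lemma cover {n : ℕ} (E : ℕ → Fin n → Fin n → Prop) (L : ℕ)
    (husc : ∀ t i j, Relation.TransGen (fun u v => ∃ k ∈ Finset.Ico t (t + L), E k u v) i j)
    (P : ℕ → Finset (Fin n)) (mono : ∀ t, P t ⊆ P (t + 1))
    (arc : ∀ t u v, u ∈ P t → E t u v → v ∈ P (t + 1)) (j : Fin n) (hj : j ∈ P 0) :
    P (n * L) = univ := by
  have hm : Monotone P := monotone_nat_of_le_succ mono
  have key : ∀ m, P (m * L) = univ ∨ m + 1 ≤ (P (m * L)).card := by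
    intro m
    induction m with
    | zero => right; simpa using Finset.card_pos.2 ⟨j, by simpa using hj⟩
    | succ m ih =>
      have hle : P (m * L) ⊆ P ((m + 1) * L) := hm (by nlinarith)
      rcases ih with ih | ih
      · left
        exact Finset.univ_subset_iff.1 (ih ▸ hle)
      · by_cases heq : P (m * L) = P ((m + 1) * L)
        · left
          have hj' : j ∈ P (m * L) := hm (Nat.zero_le _) hj
          rw [← heq]
          refine Finset.eq_univ_iff_forall.2 fun i => ?_
          have h := husc (m * L) j i
          induction h with
          | single h =>
            obtain ⟨k, hk, hE⟩ := h
            rw [Finset.mem_Ico] at hk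
            rw [heq]
            exact hm (show k + 1 ≤ (m + 1) * L by nlinarith) (arc k _ _ (hm hk.1 hj') hE)
          | tail _ h ih =>
            obtain ⟨k, hk, hE⟩ := h
            rw [Finset.mem_Ico] at hk
            rw [heq]
            exact hm (show k + 1 ≤ (m + 1) * L by nlinarith) (arc k _ _ (hm hk.1 ih) hE)
        · right
          have := Finset.card_lt_card (Finset.ssubset_iff_subset_ne.2 ⟨hle, heq⟩)
          omega
  rcases key n with h | h
  · exact h
  · have := Finset.card_le_univ (P (n * L))
    simp at this
    omega

lemma spread0 {n : ℕ} (E : ℕ → Fin n → Fin n → Prop) (L : ℕ)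
    (husc : ∀ t i j, Relation.TransGen (fun u v => ∃ k ∈ Finset.Ico t (t + L), E k u v) i j)
    (hdiag : ∀ t i, E t i i)
    (A : ℕ → Fin n → Fin n → ℝ) (γ : ℝ) (hγ : 0 < γ)
    (hA0 : ∀ t i j, 0 ≤ A t i j) (hA : ∀ t i j, E t j i → γ ≤ A t i j)
    (v : ℕ → Fin n → ℝ) (hv0 : ∀ t i, 0 ≤ v t i)
    (hv : ∀ t i, ∑ j, A t i j * v t j ≤ v (t + 1) i) (j i : Fin n) :
    γ ^ (n * L) * v 0 j ≤ v (n * L) i := by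
  have arc : ∀ t u w, γ ^ t * v 0 j ≤ v t u → E t u w → γ ^ (t+1) * v 0 j ≤ v (t + 1) w := by
    intro t u w h hE
    have h1 : A t w u * v t u ≤ ∑ j, A t w j * v t j :=
      Finset.single_le_sum (f := fun j => A t w j * v t j)
        (fun j _ => mul_nonneg (hA0 _ _ _) (hv0 _ _)) (Finset.mem_univ u)
    have h2 : γ * (γ ^ t * v 0 j) ≤ A t w u * v t u := by
      have this_1 := hA t w u hE
      have := hv0 t u
      have := hv0 0 j
      exact mul_le_mul this_1 h (by positivity) (hA0 _ _ _)
    calc _ = γ * (γ ^ t * v 0 j) := by ring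
      _ ≤ _ := h2.trans (h1.trans (hv t w))
  have := cover E L husc (fun t => univ.filter fun i => γ ^ t * v 0 j ≤ v t i)
    (fun t i hi => by
      simp only [mem_filter, mem_univ, true_and] at hi ⊢
      exact arc t i i hi (hdiag t i))
    (fun t u w hu hE => by
      simp only [mem_filter, mem_univ, true_and] at hu ⊢
      exact arc t u w hu hE) j (by simp)
  have h := Finset.eq_univ_iff_forall.1 this i
  simpa using h

lemma spread {n : ℕ} (E : ℕ → Fin n → Fin n → Prop) (L : ℕ)
    (husc : ∀ t i j, Relation.TransGen (fun u v => ∃ k ∈ Finset.Ico t (t + L), E k u v) i j)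
    (hdiag : ∀ t i, E t i i)
    (A : ℕ → Fin n → Fin n → ℝ) (γ : ℝ) (hγ : 0 < γ)
    (hA0 : ∀ t i j, 0 ≤ A t i j) (hA : ∀ t i j, E t j i → γ ≤ A t i j) (s : ℕ)
    (v : ℕ → Fin n → ℝ) (hv0 : ∀ t i, 0 ≤ v t i)
    (hv : ∀ t i, ∑ j, A (s + t) i j * v t j ≤ v (t + 1) i) (j i : Fin n) :
    γ ^ (n * L) * v 0 j ≤ v (n * L) i := by
  refine spread0 (fun t => E (s + t)) L ?_ (fun t => hdiag _) (fun t => A (s + t)) γ hγ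
    (fun t => hA0 _) (fun t => hA _) v hv0 hv j i
  intro t i j
  refine Relation.TransGen.mono ?_ _ _ (husc (s + t) i j)
  intro u v
  rintro ⟨k, hk, hE⟩
  rw [Finset.mem_Ico] at hk
  refine ⟨k - s, Finset.mem_Ico.2 ⟨by omega, by omega⟩, ?_⟩
  have : s + (k - s) = k := by omega
  simpa only [this] using hE

lemma contract_s6 {n : ℕ} (E : ℕ → Fin n → Fin n → Prop) (L : ℕ)
    (husc : ∀ t i j, Relation.TransGen (fun u v => ∃ k ∈ Finset.Ico t (t + L), E k u v) i j)
    (hdiag : ∀ t i, E t i i)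
    (A : ℕ → Fin n → Fin n → ℝ) (γ : ℝ) (hγ : 0 < γ)
    (hA0 : ∀ t i j, 0 ≤ A t i j) (hA : ∀ t i j, E t j i → γ ≤ A t i j)
    (hrow : ∀ t i, ∑ j, A t i j = 1)
    (u e : ℕ → Fin n → ℝ) (ε : ℕ → ℝ) (he : ∀ t j, |e t j| ≤ ε t)
    (hanti : Antitone ε)
    (hu : ∀ t i, u (t + 1) i = ∑ j, A t i j * (u t j + e t j)) (s : ℕ) (j0 j1 : Fin n)
    (h0 : ∀ j, u s j0 ≤ u s j) (h1 : ∀ j, u s j ≤ u s j1) (i i' : Fin n) :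
    u (s + n * L) i - u (s + n * L) i' ≤
      (1 - γ ^ (n * L)) * (u s j1 - u s j0) + 2 * (n * L : ℕ) * ε s := by
  have avg : ∀ t i (c : ℝ), ∑ j, A t i j * c = c := by
    intro t i c; rw [← Finset.sum_mul, hrow, one_mul]
  have up : ∀ t i, u (s + t) i ≤ u s j1 + t * ε s := by
    intro t
    induction t with
    | zero => intro i; simpa using h1 i
    | succ t ih =>
      intro i
      rw [← add_assoc, hu, ← avg (s + t) i (u s j1 + _)]
      refine Finset.sum_le_sum fun j _ => mul_le_mul_of_nonneg_left ?_ (hA0 _ _ _)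
      have := ih j
      have := (abs_le.1 (he (s + t) j)).2
      have := hanti (Nat.le_add_right s t)
      push_cast
      linarith
  have lo : ∀ t i, u s j0 - t * ε s ≤ u (s + t) i := by
    intro t
    induction t with
    | zero => intro i; simpa using h0 i
    | succ t ih =>
      intro i
      rw [← add_assoc, hu, ← avg (s + t) i (u s j0 - _)]
      refine Finset.sum_le_sum fun j _ => mul_le_mul_of_nonneg_left ?_ (hA0 _ _ _)
      have := ih j
      have := (abs_le.1 (he (s + t) j)).1
      have := hanti (Nat.le_add_right s t)
      push_cast
      linarith
  have := spread E L husc hdiag A γ hγ hA0 hA s (fun t i => u (s + t) i - u s j0 + t * ε s)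
    (fun t i => by have := lo t i; linarith)
    (fun t i => by
      rw [← add_assoc, hu]
      rw [show ∀ a : ℝ, a - u s j0 + ((t + 1 : ℕ) : ℝ) * ε s
        = a + (- u s j0 + ((t + 1 : ℕ) : ℝ) * ε s) from fun a => by ring,
        ← avg (s + t) i (- u s j0 + _), ← Finset.sum_add_distrib]
      refine Finset.sum_le_sum fun j _ => ?_
      rw [← mul_add]
      refine mul_le_mul_of_nonneg_left ?_ (hA0 _ _ _)
      have := (abs_le.1 (he (s + t) j)).1
      have := hanti (Nat.le_add_right s t)
      push_cast
      linarith) j1 i'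
  simp only [add_zero, Nat.cast_zero, zero_mul] at this
  have := up (n * L) i
  linarith

lemma ylower {n : ℕ} (E : ℕ → Fin n → Fin n → Prop) (L : ℕ)
    (husc : ∀ t i j, Relation.TransGen (fun u v => ∃ k ∈ Finset.Ico t (t + L), E k u v) i j)
    (hdiag : ∀ t i, E t i i)
    (A : ℕ → Fin n → Fin n → ℝ) (γ : ℝ) (hγ : 0 < γ) (hγ1 : γ ≤ 1)
    (hA0 : ∀ t i j, 0 ≤ A t i j) (hA : ∀ t i j, E t j i → γ ≤ A t i j)
    (y : ℕ → Fin n → ℝ) (hy0 : ∀ i, y 0 i = 1) (hysum : ∀ t, ∑ i, y t i = n)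
    (hypos : ∀ t i, 0 ≤ y t i)
    (hy : ∀ t i, y (t + 1) i = ∑ j, A t i j * y t j) (t : ℕ) (i : Fin n) :
    γ ^ (n * L) ≤ y t i := by
  rcases le_or_gt (n * L) t with h | h
  · obtain ⟨s, rfl⟩ := Nat.exists_eq_add_of_le' h
    have : ∃ j, 1 ≤ y s j := by
      by_contra hcon
      push Not at hcon
      have : ∑ j, y s j < ∑ j : Fin n, (1 : ℝ) :=
        Finset.sum_lt_sum_of_nonempty ⟨i, mem_univ i⟩ fun j _ => hcon j
      rw [hysum] at this
      simp at this
    obtain ⟨j, hj⟩ := this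
    have := spread E L husc hdiag A γ hγ hA0 hA s (fun t i => y (s + t) i)
      (fun t i => hypos _ _) (fun t i => (hy (s + t) i).ge) j i
    simp only [add_zero] at this
    have h2 : 0 ≤ γ ^ (n * L) := by positivity
    nlinarith
  · have : ∀ t i, γ ^ t ≤ y t i := by
      intro t
      induction t with
      | zero => intro i; simp [hy0]
      | succ t ih =>
        intro i
        rw [hy]
        have h1 : A t i i * y t i ≤ ∑ j, A t i j * y t j :=
          Finset.single_le_sum (f := fun j => A t i j * y t j)
            (fun j _ => mul_nonneg (hA0 _ _ _) (hypos _ _)) (Finset.mem_univ i)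
        refine le_trans ?_ h1
        rw [pow_succ']
        exact mul_le_mul (hA t i i (hdiag t i)) (ih i) (by positivity) (hA0 _ _ _)
    exact (pow_le_pow_of_le_one hγ.le hγ1 h.le).trans (this t i)

lemma seqbound (a : ℕ → ℝ) (α : ℕ → ℝ) (B : ℕ) (hB : 0 < B) (q K : ℝ) (hq0 : 0 ≤ q) (hq : q < 1)
    (hK : 0 ≤ K) (ha : ∀ t, 0 ≤ a t) (hα : ∀ t, 0 < α t) (hanti : Antitone α)
    (hsq : Summable fun t => α t ^ 2) (h : ∀ t, a (t + B) ≤ q * a t + K * α t) :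
    (∃ D, ∀ t, a t ≤ D) ∧ Summable fun t => α t * a t := by
  constructor
  · refine ⟨∑ t ∈ range B, a t + K * α 0 / (1 - q), fun t => ?_⟩
    have h1q : 0 < 1 - q := by linarith
    have hC0 : 0 ≤ ∑ t ∈ range B, a t := Finset.sum_nonneg fun _ _ => ha _
    have hC1 : 0 ≤ K * α 0 / (1 - q) := by have := (hα 0).le; positivity
    induction t using Nat.strong_induction_on with
    | _ t ih =>
      rcases lt_or_ge t B with ht | ht
      · have := Finset.single_le_sum (f := a) (fun _ _ => ha _) (Finset.mem_range.2 ht)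
        linarith
      · obtain ⟨s, rfl⟩ := Nat.exists_eq_add_of_le' ht
        have i1 := ih s (by omega)
        have i2 := h s
        have i3 : K * α s ≤ K * α 0 := mul_le_mul_of_nonneg_left (hanti (Nat.zero_le s)) hK
        have i4 : K * α 0 = (1 - q) * (K * α 0 / (1 - q)) := by field_simp
        nlinarith
  · have hb0 : ∀ t, 0 ≤ α t * a t := fun t => mul_nonneg (hα t).le (ha t)
    refine summable_of_sum_range_le (c := (∑ t ∈ range B, α t * a t + K * ∑' t, α t ^ 2) / (1 - q))
      hb0 fun N => ?_
    rw [le_div_iff₀ (by linarith)]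
    have s1 : ∑ t ∈ range N, α t * a t ≤ ∑ t ∈ range (B + N), α t * a t :=
      Finset.sum_le_sum_of_subset_of_nonneg (Finset.range_mono (by omega)) fun t _ _ => hb0 t
    rw [Finset.sum_range_add] at s1
    have s2 : ∑ t ∈ range N, α (B + t) * a (B + t) ≤
        ∑ t ∈ range N, (q * (α t * a t) + K * α t ^ 2) := by
      refine Finset.sum_le_sum fun t _ => ?_
      rw [add_comm B t]
      have := hanti (Nat.le_add_right t B)
      have i2 := h t
      calc _ ≤ α t * a (t + B) := mul_le_mul_of_nonneg_right this (ha _)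
        _ ≤ α t * (q * a t + K * α t) := mul_le_mul_of_nonneg_left i2 (hα t).le
        _ = _ := by ring
    rw [Finset.sum_add_distrib, ← Finset.mul_sum, ← Finset.mul_sum] at s2
    have s3 : K * ∑ t ∈ range N, α t ^ 2 ≤ K * ∑' t, α t ^ 2 :=
      mul_le_mul_of_nonneg_left (hsq.sum_le_tsum _ fun _ _ => by positivity) hK
    linarith

lemma consensus_s6 {n : ℕ} (hn : 0 < n) (E : ℕ → Fin n → Fin n → Prop) (L : ℕ) (hL : 0 < L)
    (husc : ∀ t i j, Relation.TransGen (fun u v => ∃ k ∈ Finset.Ico t (t + L), E k u v) i j)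
    (hdiag : ∀ t i, E t i i)
    (A : ℕ → Fin n → Fin n → ℝ) (γ : ℝ) (hγ : 0 < γ) (hγ1 : γ ≤ 1)
    (hA0 : ∀ t i j, 0 ≤ A t i j) (hA : ∀ t i j, E t j i → γ ≤ A t i j)
    (hrow : ∀ t i, ∑ j, A t i j = 1)
    (α : ℕ → ℝ) (hα : ∀ t, 0 < α t) (hanti : Antitone α) (hsq : Summable fun t => α t ^ 2)
    (C : ℝ) (hC : 0 ≤ C) (u e : ℕ → Fin n → ℝ) (he : ∀ t j, |e t j| ≤ C * α t)
    (hu : ∀ t i, u (t + 1) i = ∑ j, A t i j * (u t j + e t j)) (i i' : Fin n) :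
    (∃ D, ∀ t, |u t i - u t i'| ≤ D) ∧ Summable fun t => α t * |u t i - u t i'| := by
  have : Nonempty (Fin n) := ⟨⟨0, hn⟩⟩
  choose jM hjM using fun t => Finite.exists_max (u t)
  choose jm hjm using fun t => Finite.exists_min (u t)
  have hg1 : γ ^ (n * L) ≤ 1 := pow_le_one₀ hγ.le hγ1
  have hg0 : 0 < γ ^ (n * L) := by positivity
  obtain ⟨⟨D, hD⟩, hS⟩ := seqbound (fun t => u t (jM t) - u t (jm t)) α (n * L) (by positivity)
    (1 - γ ^ (n * L)) (2 * (n * L : ℕ) * C) (by linarith) (by linarith) (by positivity)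
    (fun t => sub_nonneg.2 (hjm t _)) hα hanti hsq (fun t => by
      have := contract_s6 E L husc hdiag A γ hγ hA0 hA hrow u e (fun t => C * α t) he
        (fun a b hab => mul_le_mul_of_nonneg_left (hanti hab) hC) hu t (jm t) (jM t) (hjm t) (hjM t)
        (jM (t + n * L)) (jm (t + n * L))
      linarith)
  have hb : ∀ t, |u t i - u t i'| ≤ u t (jM t) - u t (jm t) := by
    intro t
    rw [abs_le]
    have := hjM t i
    have := hjM t i'
    have := hjm t i
    have := hjm t i'
    constructor <;> linarith
  refine ⟨⟨D, fun t => (hb t).trans (hD t)⟩, ?_⟩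
  exact Summable.of_nonneg_of_le (fun t => mul_nonneg (hα t).le (abs_nonneg _))
    (fun t => mul_le_mul_of_nonneg_left (hb t) (hα t).le) hS

lemma norm_le_sum_coord {d : ℕ} (v : EuclideanSpace ℝ (Fin d)) : ‖v‖ ≤ ∑ c, |v c| := by
  have h0 : 0 ≤ ∑ c, |v c| := Finset.sum_nonneg fun _ _ => abs_nonneg _
  rw [EuclideanSpace.norm_eq, Real.sqrt_le_left h0]
  simp only [Real.norm_eq_abs]
  exact Finset.sum_sq_le_sq_sum_of_nonneg fun _ _ => abs_nonneg _

lemma consensusV {n : ℕ} (hn : 0 < n) (E : ℕ → Fin n → Fin n → Prop) (L : ℕ) (hL : 0 < L)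
    (husc : ∀ t i j, Relation.TransGen (fun u v => ∃ k ∈ Finset.Ico t (t + L), E k u v) i j)
    (hdiag : ∀ t i, E t i i)
    (A : ℕ → Fin n → Fin n → ℝ) (γ : ℝ) (hγ : 0 < γ) (hγ1 : γ ≤ 1)
    (hA0 : ∀ t i j, 0 ≤ A t i j) (hA : ∀ t i j, E t j i → γ ≤ A t i j)
    (hrow : ∀ t i, ∑ j, A t i j = 1)
    (α : ℕ → ℝ) (hα : ∀ t, 0 < α t) (hanti : Antitone α) (hsq : Summable fun t => α t ^ 2)
    (C : ℝ) (hC : 0 ≤ C) (d : ℕ) (u e : ℕ → Fin n → EuclideanSpace ℝ (Fin d))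
    (he : ∀ t j, ‖e t j‖ ≤ C * α t)
    (hu : ∀ t i, u (t + 1) i = ∑ j, A t i j • (u t j + e t j)) (i i' : Fin n) :
    (∃ D, ∀ t, ‖u t i - u t i'‖ ≤ D) ∧ Summable fun t => α t * ‖u t i - u t i'‖ := by
  have H := fun c : Fin d => consensus_s6 hn E L hL husc hdiag A γ hγ hγ1 hA0 hA hrow α hα hanti hsq
    C hC (fun t i => u t i c) (fun t i => e t i c)
    (fun t j => le_trans (by simpa using PiLp.norm_apply_le (e t j) c) (he t j))
    (fun t i => by simp [hu, mul_add]) i i'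
  constructor
  · choose D hD using fun c => (H c).1
    refine ⟨∑ c, D c, fun t => (norm_le_sum_coord _).trans (Finset.sum_le_sum fun c _ => hD c t)⟩
  · have := summable_sum (s := univ) fun c _ => (H c).2
    refine Summable.of_nonneg_of_le (fun t => mul_nonneg (hα t).le (norm_nonneg _))
      (fun t => ?_) this
    rw [← Finset.mul_sum]
    exact mul_le_mul_of_nonneg_left (norm_le_sum_coord _) (hα t).le

lemma lip_ball {d n : ℕ} (f : Fin n → EuclideanSpace ℝ (Fin d) → ℝ)
    (hconv : ∀ i, ConvexOn ℝ Set.univ (f i)) (c : EuclideanSpace ℝ (Fin d)) (R : ℝ) :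
    ∃ K : ℝ, 0 ≤ K ∧ ∀ i p q, ‖p - c‖ ≤ R → ‖q - c‖ ≤ R → f i p - f i q ≤ K * ‖p - q‖ := by
  have : ∀ i, ∃ K, LipschitzOnWith K (f i) (Metric.closedBall c R) := fun i =>
    LocallyLipschitzOn.exists_lipschitzOnWith_of_compact (isCompact_closedBall c R)
      (hconv i).locallyLipschitz.locallyLipschitzOn
  choose K hK using this
  refine ⟨∑ i, (K i : ℝ), Finset.sum_nonneg fun i _ => (K i).2, fun i p q hp hq => ?_⟩
  have h1 := (hK i).dist_le_mul p (by simpa [dist_eq_norm] using hp) q (by simpa [dist_eq_norm] using hq)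
  rw [dist_eq_norm, dist_eq_norm, Real.norm_eq_abs] at h1
  have h2 : (K i : ℝ) ≤ ∑ i, (K i : ℝ) :=
    Finset.single_le_sum (f := fun i => (K i : ℝ)) (fun i _ => (K i).2) (mem_univ i)
  exact (le_abs_self _).trans (h1.trans (mul_le_mul_of_nonneg_right h2 (norm_nonneg _)))

lemma lower1 {d n : ℕ} (f : Fin n → EuclideanSpace ℝ (Fin d) → ℝ)
    (hconv : ∀ i, ConvexOn ℝ Set.univ (f i)) (c : EuclideanSpace ℝ (Fin d)) 
    (hmin : ∀ w, ∑ i, f i c ≤ ∑ i, f i w) (D : ℝ) :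
    ∃ K : ℝ, 0 ≤ K ∧ ∀ (b : EuclideanSpace ℝ (Fin d)) (z : Fin n → EuclideanSpace ℝ (Fin d)),
      (∀ j, ‖z j - b‖ ≤ D) → ∑ i, f i c - K * ∑ j, ‖z j - b‖ ≤ ∑ i, f i (z i) := by
  obtain ⟨K, hK0, hK⟩ := lip_ball f hconv c (1 + D)
  refine ⟨K, hK0, fun b z hz => ?_⟩
  set m : ℝ := max 1 ‖b - c‖ with hm
  have hm1 : 1 ≤ m := le_max_left _ _
  have hm0 : 0 < m := by linarith
  set l : ℝ := m⁻¹ with hl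
  have hl0 : 0 < l := inv_pos.2 hm0
  have hl1 : l ≤ 1 := inv_le_one_of_one_le₀ hm1
  have hlb : l * ‖b - c‖ ≤ 1 := by
    rw [hl, inv_mul_le_iff₀ hm0, mul_one]; exact le_max_right _ _
  have e1 : ∀ j, f j (c + l • (b - c)) - l * (K * ‖z j - b‖) ≤ (1 - l) * f j c + l * f j (z j) := by
    intro j
    have hD : 0 ≤ D := (norm_nonneg _).trans (hz j)
    have h1 := (hconv j).2 (Set.mem_univ c) (Set.mem_univ (z j)) (by linarith : 0 ≤ 1 - l) hl0.le
      (by ring)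
    have n1 : ‖c + l • (b - c) - c‖ ≤ 1 := by
      rw [add_sub_cancel_left, norm_smul, Real.norm_of_nonneg hl0.le]; exact hlb
    have e2 : (c + l • (b - c)) - ((1 - l) • c + l • z j) = l • (b - z j) := by module
    have n2 : ‖(c + l • (b - c)) - ((1 - l) • c + l • z j)‖ = l * ‖z j - b‖ := by
      rw [e2, norm_smul, Real.norm_of_nonneg hl0.le, norm_sub_rev]
    have n3 : ‖((1 - l) • c + l • z j) - c‖ ≤ 1 + D := by
      have : ((1 - l) • c + l • z j) - c
        = (c + l • (b - c) - c) - ((c + l • (b - c)) - ((1 - l) • c + l • z j)) := by abel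
      rw [this]
      refine (norm_sub_le _ _).trans (add_le_add n1 ?_)
      rw [n2]
      have := hz j
      nlinarith [norm_nonneg (z j - b)]
    have h2 := hK j _ _ (n1.trans (by linarith)) n3
    rw [n2] at h2
    simp only [smul_eq_mul] at h1
    linarith
  have e3 := Finset.sum_le_sum fun j (_ : j ∈ univ) => e1 j
  rw [Finset.sum_sub_distrib, Finset.sum_add_distrib, ← Finset.mul_sum, ← Finset.mul_sum,
    ← Finset.mul_sum, ← Finset.mul_sum] at e3
  have e4 := hmin (c + l • (b - c))
  have : l * (∑ i, f i c - K * ∑ j, ‖z j - b‖) ≤ l * ∑ i, f i (z i) := by linarith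
  exact le_of_mul_le_mul_left this hl0

lemma optimize {n d : ℕ} (hn : 0 < n) (α : ℕ → ℝ) (hα : ∀ t, 0 < α t) (hαdiv : ¬ Summable α)
    (hαsq : Summable fun t => α t ^ 2) (G : ℝ) (hG0 : 0 ≤ G)
    (z g : ℕ → Fin n → EuclideanSpace ℝ (Fin d)) (hG : ∀ t i, ‖g t i‖ ≤ G)
    (f : Fin n → EuclideanSpace ℝ (Fin d) → ℝ)
    (hconv : ∀ i, ConvexOn ℝ Set.univ (f i))
    (F : EuclideanSpace ℝ (Fin d) → ℝ)
    (hF : ∀ w, F w = (n : ℝ)⁻¹ * ∑ i, f i w)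
    (zstar : EuclideanSpace ℝ (Fin d))
    (hmin : ∀ w, F zstar ≤ F w)
    (hsub : ∀ t j w, f j (z t j) + ⟪g t j, w - z t j⟫_ℝ ≤ f j w)
    (b : ℕ → EuclideanSpace ℝ (Fin d))
    (hb : ∀ t, b (t + 1) = b t - α t • ((n : ℝ)⁻¹ • ∑ j, g t j))
    (Δ : ℕ → ℝ) (hΔ : ∀ t j, ‖z t j - b t‖ ≤ Δ t) (D : ℝ) (hD : ∀ t, Δ t ≤ D)
    (hS : Summable fun t => α t * Δ t) (k : Fin n) :
    Tendsto (fun t =>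
          F ((∑ τ ∈ Finset.range (t + 1), α τ)⁻¹ •
              ∑ τ ∈ Finset.range (t + 1), α τ • z τ k))
        atTop (nhds (F zstar)) := by
  have hN : (0 : ℝ) < n := by exact_mod_cast hn
  have hNz : (n : ℝ) ≠ 0 := hN.ne'
  have hF' : ∀ w, ∑ i, f i w = n * F w := fun w => by rw [hF]; field_simp
  have hΔ0 : ∀ t, 0 ≤ Δ t := fun t => (norm_nonneg _).trans (hΔ t k)
  have hαΔ : ∀ t, 0 ≤ α t * Δ t := fun t => mul_nonneg (hα t).le (hΔ0 t)
  have basic : ∀ t, ‖b (t + 1) - zstar‖ ^ 2 ≤ ‖b t - zstar‖ ^ 2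
      - 2 * α t * ((n : ℝ)⁻¹ * ∑ j, f j (z t j) - F zstar)
      + 2 * G * (α t * Δ t) + G ^ 2 * α t ^ 2 := by
    intro t
    set gb := (n : ℝ)⁻¹ • ∑ j, g t j with hgb
    have n1 : ‖gb‖ ≤ G := by
      rw [hgb, norm_smul, Real.norm_of_nonneg (by positivity), inv_mul_le_iff₀ hN]
      refine (norm_sum_le _ _).trans ((Finset.sum_le_sum fun j _ => hG t j).trans ?_)
      simp
    have i1 : (n : ℝ)⁻¹ * ∑ j, f j (z t j) - F zstar - G * Δ t ≤ ⟪gb, b t - zstar⟫_ℝ := by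
      rw [hgb, real_inner_smul_left, sum_inner]
      have : (n : ℝ)⁻¹ * ∑ j, f j (z t j) - F zstar - G * Δ t
        = (n : ℝ)⁻¹ * ∑ j, (f j (z t j) - f j zstar - G * Δ t) := by
        rw [hF, Finset.sum_sub_distrib, Finset.sum_sub_distrib]
        simp
        field_simp
      rw [this]
      refine mul_le_mul_of_nonneg_left (Finset.sum_le_sum fun j _ => ?_) (by positivity)
      have h1 := hsub t j zstar
      have h2 : ⟪g t j, b t - zstar⟫_ℝ
        = - ⟪g t j, zstar - z t j⟫_ℝ - ⟪g t j, z t j - b t⟫_ℝ := by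
        simp only [inner_sub_right]; ring
      have h3 : ⟪g t j, z t j - b t⟫_ℝ ≤ G * Δ t :=
        (real_inner_le_norm _ _).trans (mul_le_mul (hG t j) (hΔ t j) (norm_nonneg _) hG0)
      linarith
    have e1 : b (t + 1) - zstar = (b t - zstar) - α t • gb := by rw [hb]; abel
    rw [e1, norm_sub_sq_real, real_inner_smul_right, real_inner_comm, norm_smul,
      Real.norm_of_nonneg (hα t).le, mul_pow]
    have i2 := mul_le_mul_of_nonneg_left i1 (hα t).le
    have i3 : ‖gb‖ ^ 2 ≤ G ^ 2 := pow_le_pow_left₀ (norm_nonneg _) n1 2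
    have i4 := mul_le_mul_of_nonneg_left i3 (sq_nonneg (α t))
    linarith
  have tele : ∀ (C : ℝ) (h : ℕ → ℝ), 0 ≤ C → (∀ t, ‖b (t + 1) - zstar‖ ^ 2 + h t ≤
      ‖b t - zstar‖ ^ 2 + C * (α t * Δ t) + G ^ 2 * α t ^ 2) →
      ∀ T, ‖b T - zstar‖ ^ 2 + ∑ t ∈ range T, h t ≤ ‖b 0 - zstar‖ ^ 2 +
        C * ∑' t, α t * Δ t + G ^ 2 * ∑' t, α t ^ 2 := by
    intro C h hC hh T
    have h1 : ‖b T - zstar‖ ^ 2 + ∑ t ∈ range T, h t ≤ ‖b 0 - zstar‖ ^ 2 +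
        C * ∑ t ∈ range T, α t * Δ t + G ^ 2 * ∑ t ∈ range T, α t ^ 2 := by
      induction T with
      | zero => simp
      | succ T ih =>
        simp only [Finset.sum_range_succ]
        have := hh T
        linarith
    have h2 := mul_le_mul_of_nonneg_left (hS.sum_le_tsum (range T) fun t _ => hαΔ t) hC
    have h3 := mul_le_mul_of_nonneg_left
      (hαsq.sum_le_tsum (range T) fun t _ => sq_nonneg (α t)) (sq_nonneg G)
    linarith
  -- boundedness of the averages
  obtain ⟨K1, hK1, hlow⟩ := lower1 f hconv zstar
    (fun w => by rw [hF', hF']; exact mul_le_mul_of_nonneg_left (hmin w) hN.le) D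
  have bd := tele (2 * K1 + 2 * G) (fun _ => 0) (by positivity) (fun t => by
    have h1 := hlow (b t) (z t) (fun j => (hΔ t j).trans (hD t))
    have h2 : ∑ j, ‖z t j - b t‖ ≤ n * Δ t :=
      (Finset.sum_le_sum fun j _ => hΔ t j).trans (by simp)
    have h3 : - (K1 * Δ t) ≤ (n : ℝ)⁻¹ * ∑ j, f j (z t j) - F zstar := by
      have h5 : n * (F zstar - K1 * Δ t) ≤ ∑ j, f j (z t j) := by
        have := mul_le_mul_of_nonneg_left h2 hK1
        rw [hF'] at h1
        linarith
      have := (le_inv_mul_iff₀ hN).2 h5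
      linarith
    have h4 := mul_le_mul_of_nonneg_left h3 (hα t).le
    have := basic t
    linarith)
  set R0 := ‖b 0 - zstar‖ ^ 2 +
        (2 * K1 + 2 * G) * ∑' t, α t * Δ t + G ^ 2 * ∑' t, α t ^ 2 with hR0
  have bd2 : ∀ t j, ‖z t j - zstar‖ ≤ R0 + 1 + D := by
    intro t j
    have h1 := bd t
    simp only [Finset.sum_const_zero, add_zero] at h1
    have h2 : ‖b t - zstar‖ ≤ R0 + 1 := by nlinarith [sq_nonneg (‖b t - zstar‖ - 1)]
    have h3 : z t j - zstar = (z t j - b t) + (b t - zstar) := by abel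
    rw [h3]
    have := norm_add_le (z t j - b t) (b t - zstar)
    have := hΔ t j
    have := hD t
    linarith
  obtain ⟨K2, hK2, hlip⟩ := lip_ball f hconv zstar (R0 + 1 + D)
  have fin := tele (4 * K2 + 2 * G) (fun t => 2 * (α t * (F (z t k) - F zstar))) (by positivity)
    (fun t => by
      have h1 : ∀ j, f j (z t k) - 2 * K2 * Δ t ≤ f j (z t j) := fun j => by
        have a1 := hlip j _ _ (bd2 t k) (bd2 t j)
        have a2 : ‖z t k - z t j‖ ≤ 2 * Δ t := by
          have : z t k - z t j = (z t k - b t) - (z t j - b t) := by abel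
          rw [this]
          have := norm_sub_le (z t k - b t) (z t j - b t)
          have := hΔ t j
          have := hΔ t k
          linarith
        have := mul_le_mul_of_nonneg_left a2 hK2
        linarith
      have h2 := Finset.sum_le_sum fun j (_ : j ∈ univ) => h1 j
      rw [Finset.sum_sub_distrib, hF'] at h2
      simp only [Finset.sum_const, card_univ, Fintype.card_fin, nsmul_eq_mul] at h2
      rw [← mul_sub] at h2
      have h3 := (le_inv_mul_iff₀ hN).2 h2
      have h4 := mul_le_mul_of_nonneg_left h3 (hα t).le
      have := basic t
      linarith)
  set C2 := ‖b 0 - zstar‖ ^ 2 +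
        (4 * K2 + 2 * G) * ∑' t, α t * Δ t + G ^ 2 * ∑' t, α t ^ 2 with hC2
  have hconvF : ConvexOn ℝ Set.univ F := by
    refine ⟨convex_univ, fun p _ q _ a c ha hc hac => ?_⟩
    simp only [hF, smul_eq_mul]
    have : ∑ i, f i (a • p + c • q) ≤ ∑ i, (a * f i p + c * f i q) :=
      Finset.sum_le_sum fun i _ => (hconv i).2 (Set.mem_univ p) (Set.mem_univ q) ha hc hac
    rw [Finset.sum_add_distrib, ← Finset.mul_sum, ← Finset.mul_sum] at this
    have := mul_le_mul_of_nonneg_left this (inv_nonneg.2 hN.le)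
    linarith
  have hdiv : Tendsto (fun t => ∑ τ ∈ range (t + 1), α τ) atTop atTop :=
    ((not_summable_iff_tendsto_nat_atTop_of_nonneg fun t => (hα t).le).1 hαdiv).comp
      (tendsto_add_atTop_nat 1)
  have hlim : Tendsto (fun t => F zstar + (∑ τ ∈ range (t + 1), α τ)⁻¹ * C2) atTop
      (nhds (F zstar)) := by
    simpa using (hdiv.inv_tendsto_atTop.mul_const C2).const_add (F zstar)
  refine tendsto_of_tendsto_of_tendsto_of_le_of_le tendsto_const_nhds hlim (fun t => hmin _)
    fun t => ?_
  have hpos : 0 < ∑ τ ∈ range (t + 1), α τ := Finset.sum_pos (fun τ _ => hα τ) (by simp)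
  have hJ := hconvF.map_centerMass_le (t := range (t + 1)) (w := α) (p := fun τ => z τ k)
    (fun τ _ => (hα τ).le) hpos (fun _ _ => Set.mem_univ _)
  simp only [Finset.centerMass, smul_eq_mul, Function.comp] at hJ
  refine hJ.trans ?_
  rw [inv_mul_le_iff₀ hpos, mul_add, mul_inv_cancel_left₀ hpos.ne']
  have h1 := fin (t + 1)
  rw [← Finset.mul_sum] at h1
  simp only [mul_sub] at h1
  rw [Finset.sum_sub_distrib, ← Finset.sum_mul] at h1
  have h2 := sq_nonneg ‖b (t + 1) - zstar‖
  have h3 : 0 ≤ C2 := by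
    have s1 : 0 ≤ ∑' t, α t * Δ t := tsum_nonneg hαΔ
    have s2 : 0 ≤ ∑' t, α t ^ 2 := tsum_nonneg fun t => sq_nonneg _
    positivity
  linarith

theorem stmt_6
    (n : ℕ) (hn : 0 < n)
    (W : ℕ → Matrix (Fin n) (Fin n) ℝ)
    (hWnonneg : ∀ t i j, 0 ≤ W t i j)
    (hWcol : ∀ t j, ∑ i, W t i j = 1)
    (hWdiag : ∀ t i, 0 < W t i i)
    (β : ℝ) (hβ : 0 < β)
    (hWβ : ∀ t i j, 0 < W t i j → β ≤ W t i j)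
    (L : ℕ) (hL : 0 < L)
    (hUSC : ∀ t : ℕ, ∀ i j : Fin n,
      Relation.TransGen (fun u v : Fin n => ∃ k ∈ Finset.Ico t (t + L), 0 < W k v u) i j)
    (d : ℕ)
    (x g : ℕ → Fin n → EuclideanSpace ℝ (Fin d))
    (y : ℕ → Fin n → ℝ)
    (hy0 : ∀ i, y 0 i = 1)
    (hyrec : ∀ t i, y (t + 1) i = ∑ j, W t i j * y t j)
    (α : ℕ → ℝ) (hαpos : ∀ t, 0 < α t)
    (hxrec : ∀ t i, x (t + 1) i = ∑ j, W t i j • (x t j - α t • g t j))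
    (z : ℕ → Fin n → EuclideanSpace ℝ (Fin d))
    (hz : ∀ t i, z t i = (y t i)⁻¹ • x t i)
    (G : ℝ) (hG : ∀ t i, ‖g t i‖ ≤ G)
    (f : Fin n → EuclideanSpace ℝ (Fin d) → ℝ)
    (hconv : ∀ i, ConvexOn ℝ Set.univ (f i))
    (F : EuclideanSpace ℝ (Fin d) → ℝ)
    (hF : ∀ w, F w = (n : ℝ)⁻¹ * ∑ i, f i w)
    (zstar : EuclideanSpace ℝ (Fin d))
    (hmin : ∀ w, F zstar ≤ F w)
    (hsub : ∀ t j w, f j (z t j) + ⟪g t j, w - z t j⟫_ℝ ≤ f j w)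
    (hαmono : ∀ t, α (t + 1) ≤ α t)
    (hαdiv : ¬ Summable α)
    (hαsq : Summable fun t => α t ^ 2)
    :
    ∀ k : Fin n,
      Tendsto (fun t =>
          F ((∑ τ ∈ Finset.range (t + 1), α τ)⁻¹ •
              ∑ τ ∈ Finset.range (t + 1), α τ • z τ k))
        atTop (nhds (F zstar)) := by
  intro k
  have hN : (0 : ℝ) < n := by exact_mod_cast hn
  have hG0 : 0 ≤ G := (norm_nonneg _).trans (hG 0 k)
  have hanti : Antitone α := antitone_nat_of_succ_le hαmono
  have hβ1 : β ≤ 1 := by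
    refine (hWβ 0 k k (hWdiag 0 k)).trans ?_
    rw [← hWcol 0 k]
    exact Finset.single_le_sum (f := fun i => W 0 i k) (fun i _ => hWnonneg _ _ _) (mem_univ k)
  have hynn : ∀ t i, 0 ≤ y t i := by
    intro t
    induction t with
    | zero => intro i; simp [hy0]
    | succ t ih =>
      intro i; rw [hyrec]
      exact Finset.sum_nonneg fun j _ => mul_nonneg (hWnonneg _ _ _) (ih j)
  have hysum : ∀ t, ∑ i, y t i = n := by
    intro t
    induction t with
    | zero => simp [hy0]
    | succ t ih =>
      simp only [hyrec]
      rw [Finset.sum_comm]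
      simp only [← Finset.sum_mul, hWcol, one_mul, ih]
  set E : ℕ → Fin n → Fin n → Prop := fun t u v => 0 < W t v u with hE
  have hlow : ∀ t i, β ^ (n * L) ≤ y t i := ylower E L hUSC hWdiag W β hβ hβ1 hWnonneg
    (fun t i j h => hWβ t i j h) y hy0 hysum hynn hyrec
  set η : ℝ := β ^ (n * L) with hη
  have hη0 : 0 < η := by positivity
  have hypos : ∀ t i, 0 < y t i := fun t i => hη0.trans_le (hlow t i)
  have hyn : ∀ t i, y t i ≤ n := fun t i => by
    rw [← hysum t]; exact Finset.single_le_sum (fun i _ => hynn t i) (mem_univ i)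
  have hxz : ∀ t i, x t i = y t i • z t i := fun t i => by
    rw [hz, smul_smul, mul_inv_cancel₀ (hypos t i).ne', one_smul]
  have hηn : η ≤ n := (hlow 0 k).trans (hyn 0 k)
  have hcons := consensusV hn E L hL hUSC hWdiag
    (fun t i j => W t i j * y t j / y (t + 1) i) (β * η / n) (by positivity)
    (by rw [div_le_one hN]; nlinarith)
    (fun t i j => div_nonneg (mul_nonneg (hWnonneg _ _ _) (hynn _ _)) (hynn _ _))
    (fun t i j h => by
      have := hWβ t i j h
      exact div_le_div₀ (mul_nonneg (hWnonneg _ _ _) (hynn _ _))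
        (mul_le_mul this (hlow t j) hη0.le (hWnonneg _ _ _)) (hypos _ _) (hyn _ _))
    (fun t i => by
      rw [← Finset.sum_div, ← hyrec, div_self (hypos _ _).ne'])
    α hαpos hanti hαsq (G / η) (by positivity) d z (fun t j => -((α t / y t j) • g t j))
    (fun t j => by
      rw [norm_neg, norm_smul, Real.norm_of_nonneg (div_nonneg (hαpos t).le (hynn _ _))]
      calc α t / y t j * ‖g t j‖ ≤ α t / η * G :=
            mul_le_mul (div_le_div_of_nonneg_left (hαpos t).le hη0 (hlow t j)) (hG t j)
              (norm_nonneg _) (div_nonneg (hαpos t).le hη0.le)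
        _ = G / η * α t := by ring)
    (fun t i => by
      rw [hz, hxrec, Finset.smul_sum]
      refine Finset.sum_congr rfl fun j _ => ?_
      rw [hxz t j]
      have h1 := (hypos t j).ne'
      have h2 := (hypos (t + 1) i).ne'
      simp only [smul_add, smul_sub, smul_neg, smul_smul]
      rw [← sub_eq_add_neg]
      congr 2 <;> field_simp)
  have hNz : (n : ℝ) ≠ 0 := hN.ne'
  choose Db hDb using fun i j => (hcons i j).1
  refine optimize hn α hαpos hαdiv hαsq G hG0 z g hG f hconv F hF zstar hmin hsub
    (fun t => (n : ℝ)⁻¹ • ∑ i, x t i) ?_ (fun t => ∑ i, ∑ j, ‖z t i - z t j‖) ?_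
    (∑ i, ∑ j, Db i j) ?_ ?_ k
  · intro t
    simp only [hxrec]
    rw [Finset.sum_comm]
    simp only [← Finset.sum_smul, hWcol, one_smul]
    rw [Finset.sum_sub_distrib, ← Finset.smul_sum, smul_sub, smul_comm]
  · intro t j
    have e1 : z t j - (n : ℝ)⁻¹ • ∑ i, x t i = (n : ℝ)⁻¹ • ∑ i, y t i • (z t j - z t i) := by
      simp only [smul_sub, Finset.sum_sub_distrib, ← Finset.sum_smul, hysum, ← hxz]
      rw [smul_smul, inv_mul_cancel₀ hNz, one_smul]
    rw [e1, norm_smul, Real.norm_of_nonneg (by positivity), inv_mul_le_iff₀ hN]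
    have e2 : ∑ i, ‖z t j - z t i‖ ≤ ∑ j, ∑ i, ‖z t j - z t i‖ :=
      Finset.single_le_sum (f := fun j => ∑ i, ‖z t j - z t i‖)
        (fun j _ => Finset.sum_nonneg fun i _ => norm_nonneg _) (mem_univ j)
    calc _ ≤ ∑ i, ‖y t i • (z t j - z t i)‖ := norm_sum_le _ _
      _ ≤ ∑ i, n * ‖z t j - z t i‖ := by
        refine Finset.sum_le_sum fun i _ => ?_
        rw [norm_smul, Real.norm_of_nonneg (hynn t i)]
        exact mul_le_mul_of_nonneg_right (hyn t i) (norm_nonneg _)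
      _ = n * ∑ i, ‖z t j - z t i‖ := by rw [Finset.mul_sum]
      _ ≤ _ := mul_le_mul_of_nonneg_left e2 hN.le
  · intro t
    exact Finset.sum_le_sum fun i _ => Finset.sum_le_sum fun j _ => hDb i j t
  · simp only [Finset.mul_sum]
    exact summable_sum fun i _ => summable_sum fun j _ => (hcons i j).2
end
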